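/- Let 𝒟 ⊆ 𝕄 be an MSRD code of minimum distance d and assume there exists a chain of MSRD codes 𝒟 = 𝒟_d ⊇ 𝒟_{d+1} ⊇ ... ⊇ 𝒟_n with d(𝒟_h) = h for all d ≤ h ≤ n. Then a sequence of positive integers d_1 ≤ ... ≤ d_k is the sequence of generalized sum-rank weights of some subcode 𝒞 ⊆ 𝒟 if and only if k ≤ dim(𝒟) and (d_1, ..., d_k) is a subsequence of the sequence (d_1(𝒟), ..., d_{dim 𝒟}(𝒟)); moreover, in this case 𝒞 may be chosen so that it satisfies the chain condition, and hence so that g_r(𝒞) = d_r for all r ∈ [k]. -/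

import Mathlib

open Module

variable {F : Type*} [Field F] [Fintype F] {t : ℕ} {m n : Fin t → ℕ}

/-- The sum-rank weight of an element of `𝕄 = F^{m 0 × n 0} × ⋯ × F^{m (t-1) × n (t-1)}`. -/
noncomputable def srk (C : ∀ i : Fin t, Matrix (Fin (m i)) (Fin (n i)) F) : ℕ :=
  ∑ i, (C i).rank

/-- The maximum sum-rank of a code. -/
noncomputable def maxsrk (𝒞 : Submodule F (∀ i : Fin t, Matrix (Fin (m i)) (Fin (n i)) F)) : ℕ :=
  sSup {w | ∃ C ∈ 𝒞, srk C = w}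

/-- The minimum distance of a code. -/
noncomputable def minDist (𝒞 : Submodule F (∀ i : Fin t, Matrix (Fin (m i)) (Fin (n i)) F)) : ℕ :=
  sInf {w | ∃ C ∈ 𝒞, C ≠ 0 ∧ srk C = w}

/-- The maximum rank of a subspace of a matrix space. -/
noncomputable def maxrank {a b : ℕ} (𝒜 : Submodule F (Matrix (Fin a) (Fin b) F)) : ℕ :=
  sSup {w | ∃ A ∈ 𝒜, A.rank = w}

/-- Optimal anticodes in a single matrix space. -/
def IsOptAnticode {a b : ℕ} (𝒜 : Submodule F (Matrix (Fin a) (Fin b) F)) : Prop :=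
  Module.finrank F 𝒜 = a * maxrank 𝒜

/-- The weight of a sum-rank metric code: the minimum of `maxsrk` over products of
optimal anticodes containing it. -/
noncomputable def codeWt (𝒞 : Submodule F (∀ i : Fin t, Matrix (Fin (m i)) (Fin (n i)) F)) : ℕ :=
  sInf {w | ∃ 𝒜 : ∀ i : Fin t, Submodule F (Matrix (Fin (m i)) (Fin (n i)) F),
    (∀ i, IsOptAnticode (𝒜 i)) ∧ 𝒞 ≤ Submodule.pi Set.univ 𝒜 ∧
      maxsrk (Submodule.pi Set.univ 𝒜) = w}

/-- The `r`-th generalized sum-rank weight of a code. -/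
noncomputable def gw (𝒞 : Submodule F (∀ i : Fin t, Matrix (Fin (m i)) (Fin (n i)) F))
    (r : ℕ) : ℕ :=
  sInf {w | ∃ 𝒟 : Submodule F (∀ i : Fin t, Matrix (Fin (m i)) (Fin (n i)) F),
    𝒟 ≤ 𝒞 ∧ r ≤ Module.finrank F 𝒟 ∧ codeWt 𝒟 = w}

/-- Greedy `r`-subcodes of a code. -/
def IsGreedy (𝒞 : Submodule F (∀ i : Fin t, Matrix (Fin (m i)) (Fin (n i)) F)) :
    ℕ → Submodule F (∀ i : Fin t, Matrix (Fin (m i)) (Fin (n i)) F) → Prop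
  | 0, 𝒟 => 𝒟 = ⊥
  | 1, 𝒟 => 𝒟 ≤ 𝒞 ∧ Module.finrank F 𝒟 = 1 ∧ codeWt 𝒟 = gw 𝒞 1
  | (r + 2), 𝒟 => 𝒟 ≤ 𝒞 ∧ Module.finrank F 𝒟 = r + 2 ∧
      (∃ 𝒟', IsGreedy 𝒞 (r + 1) 𝒟' ∧ 𝒟' ≤ 𝒟) ∧
      (∀ ℰ : Submodule F (∀ i : Fin t, Matrix (Fin (m i)) (Fin (n i)) F),
        ℰ ≤ 𝒞 → Module.finrank F ℰ = r + 2 →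
        (∃ 𝒟', IsGreedy 𝒞 (r + 1) 𝒟' ∧ 𝒟' ≤ ℰ) → codeWt 𝒟 ≤ codeWt ℰ)

/-- The `r`-th greedy weight of a code (the weight of any greedy `r`-subcode). -/
noncomputable def greedyWt (𝒞 : Submodule F (∀ i : Fin t, Matrix (Fin (m i)) (Fin (n i)) F))
    (r : ℕ) : ℕ :=
  sInf {w | ∃ 𝒟, IsGreedy 𝒞 r 𝒟 ∧ codeWt 𝒟 = w}

/-- The chain condition: there is a complete flag `0 ⊊ 𝒟_1 ⊊ ⋯ ⊊ 𝒟_k = 𝒞` with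
`wt 𝒟_r = d_r(𝒞)` for all `r ∈ [k]`. -/
def ChainCondition (𝒞 : Submodule F (∀ i : Fin t, Matrix (Fin (m i)) (Fin (n i)) F)) : Prop :=
  ∃ 𝒟 : ℕ → Submodule F (∀ i : Fin t, Matrix (Fin (m i)) (Fin (n i)) F),
    𝒟 0 = ⊥ ∧ 𝒟 (Module.finrank F 𝒞) = 𝒞 ∧
    (∀ r, r < Module.finrank F 𝒞 → 𝒟 r < 𝒟 (r + 1)) ∧
    (∀ r, 1 ≤ r → r ≤ Module.finrank F 𝒞 → codeWt (𝒟 r) = gw 𝒞 r)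

/-- Maximum sum-rank distance (MSRD) codes. -/
def IsMSRD (𝒞 : Submodule F (∀ i : Fin t, Matrix (Fin (m i)) (Fin (n i)) F)) : Prop :=
  ∃ j : Fin t, ∃ δ : ℕ, δ + 1 ≤ n j ∧
    minDist 𝒞 = ∑ i ∈ Finset.Iio j, n i + δ + 1 ∧
    Module.finrank F 𝒞 + δ * m j = ∑ i ∈ Finset.Ici j, m i * n i

/-- `d` is a subsequence of `e`. -/
def IsSubseq {k K : ℕ} (d : Fin k → ℕ) (e : Fin K → ℕ) : Prop :=
  ∃ φ : Fin k → Fin K, StrictMono φ ∧ ∀ r, d r = e (φ r)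

/-!
An optimal anticode of maximum rank `a + 1` contains one of maximum rank `a`. Indeed, by averaging,
every transversal of the matrix positions meets the pivots of the anticode equally often, and
exchanging two entries of a transversal shows that every pivot lies on a full column or a full row
of pivots. The members of the anticode can be prescribed arbitrarily on this line, and those
vanishing on it form the smaller anticode.

Take a product of optimal anticodes that realises the weight of a code. When that weight exceeds
`n 0 + ⋯ + n (j - 1)`, shrinking one factor of the product in this way lowers the weight at the cost
of at most `m j` dimensions. Hence a value `h` with
`n 0 + ⋯ + n (j - 1) < h ≤ n 0 + ⋯ + n j` occurs at most `m j` times among the generalized weights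
of any code.

For a code `D` heading a chain of MSRD codes this bound is attained. The codewords of the `h`-th
code of the chain supported on the first `h` columns form a space of dimension exactly `m j` that is
complementary to the next code of the chain. Joining bases of these spaces gives a basis of `D`
whose first `r` members span a subcode of weight `d_r(D)`, while the codewords in the span of the
members from the `r`-th on have sum-rank at least `d_r(D)`. Both properties pass to subfamilies, so
the subfamilies of this basis realise the subsequences of the weights of `D`, with the chain
condition. Conversely, the weights of a subcode are sorted and no value occurs more often than among
those of `D`, so they form a subsequence.
-/

/-! ### Spaces of matrices of bounded rank -/

section Leading

variable {ι R K : Type*}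

/-- `x` has its first nonzero entry at position `i`: the echelon-form notion of a leading entry. -/
def IsLeading [LT ι] [Zero R] (x : ι → R) (i : ι) : Prop :=
  x i ≠ 0 ∧ ∀ k < i, x k = 0

theorem exists_isLeading [LinearOrder ι] [Finite ι] [Zero R] {x : ι → R} (hx : x ≠ 0) :
    ∃ i, IsLeading x i := by
  obtain ⟨i, hi, hmin⟩ := WellFounded.has_min wellFounded_lt {i | x i ≠ 0}
    (Function.ne_iff.1 hx)
  exact ⟨i, hi, fun k hk => by_contra fun h => hmin k h hk⟩

theorem linearIndependent_of_isLeading [LinearOrder ι] [Finite ι] [Field K] {α : Type*}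
    {v : α → ι → K} {f : α → ι} (hf : f.Injective) (hv : ∀ a, IsLeading (v a) (f a)) :
    LinearIndependent K v := by
  classical
  rw [linearIndependent_iff']
  intro s c hsum
  by_contra! hne
  obtain ⟨b, hbs, hb⟩ := hne
  obtain ⟨a, ha, hmin⟩ := ({a ∈ s | c a ≠ 0} : Finset α).exists_min_image f
    ⟨b, Finset.mem_filter.2 ⟨hbs, hb⟩⟩
  rw [Finset.mem_filter] at ha
  have hvanish : ∀ a' ∈ s, a' ≠ a → c a' * v a' (f a) = 0 := by
    intro a' ha' hne
    by_cases hc : c a' = 0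
    · rw [hc, zero_mul]
    · rw [(hv a').2 (f a) ((hmin a' (Finset.mem_filter.2 ⟨ha', hc⟩)).lt_of_ne (hf.ne hne.symm)),
        mul_zero]
  have heval : c a * v a (f a) = 0 := by
    rw [← Finset.sum_eq_single_of_mem a ha.1 hvanish]
    simpa using congrFun hsum (f a)
  exact mul_ne_zero ha.2 (hv a).1 heval

theorem eq_top_of_forall_isLeading [LinearOrder ι] [Finite ι] [Field K]
    {U : Submodule K (ι → K)} (hU : ∀ i, ∃ x ∈ U, IsLeading x i) : U = ⊤ := by
  have := Fintype.ofFinite ι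
  choose x hx hlead using hU
  have hspan := (linearIndependent_of_isLeading Function.injective_id
    hlead).span_eq_top_of_card_eq_finrank' (by simp)
  exact top_le_iff.1 (hspan ▸ Submodule.span_le.2 (Set.range_subset_iff.2 hx))

end Leading

section Rank

variable {ι κ V K : Type*} [Field K]

theorem linearIndependent_update_of_notMem_span [DecidableEq ι] [AddCommGroup V] [Module K V]
    {v : ι → V} (hv : LinearIndependent K v) {i : ι} {y : V}
    (hy : y ∉ Submodule.span K (v '' {i}ᶜ)) :
    LinearIndependent K (Function.update v i y) := by
  have heq : Set.EqOn (Function.update v i y) v {i}ᶜ :=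
    fun j hj => Function.update_of_ne hj y v
  have huniv : (Set.univ : Set ι) = insert i {i}ᶜ := by rw [Set.insert_eq, Set.union_compl_self]
  rw [← linearIndepOn_univ_iff, huniv,
    linearIndepOn_insert (Set.notMem_compl_iff.2 (Set.mem_singleton i)),
    Function.update_self, heq.image_eq]
  exact ⟨(hv.linearIndepOn _).congr heq.symm, hy⟩

theorem linearIndependent_update_or_update_add [DecidableEq ι] [AddCommGroup V] [Module K V]
    {v : ι → V} (hv : LinearIndependent K v) (i : ι) (y : V) :
    LinearIndependent K (Function.update v i y) ∨
      LinearIndependent K (Function.update v i (y + v i)) := by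
  by_cases hy : y ∈ Submodule.span K (v '' {i}ᶜ)
  · refine .inr (linearIndependent_update_of_notMem_span hv fun h => ?_)
    exact hv.notMem_span_image (Set.notMem_compl_iff.2 (Set.mem_singleton i))
      ((Submodule.add_mem_iff_right _ hy).1 h)
  · exact .inl (linearIndependent_update_of_notMem_span hv hy)

theorem exists_card_le_rank_add [Finite ι] [Fintype κ] [LinearOrder κ]
    {A : Submodule K (Matrix ι κ K)} {J : Finset κ} {M : J → Matrix ι κ K} (hM : ∀ j, M j ∈ A)
    (hM0 : ∀ j : J, ∀ l < j.1, (M j).col l = 0)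
    (hMI : LinearIndependent K fun j : J => (M j).col j) (N : Matrix ι κ K) :
    ∃ X ∈ A, J.card ≤ (N + X).rank := by
  classical
  -- Correct the columns from left to right: adding `M a` changes no column to the left of `a`.
  have hpartial : ∀ s : Finset J, ∃ X ∈ A, LinearIndependent K
      (s.piecewise (fun j => (N + X).col j) (fun j => (M j).col j)) := by
    intro s
    induction s using Finset.induction_on_max with
    | empty => exact ⟨0, A.zero_mem, by simpa using hMI⟩
    | insert a s hs ih =>
      obtain ⟨X, hX, hLI⟩ := ih
      obtain h | h := linearIndependent_update_or_update_add hLI a ((N + X).col a)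
      · exact ⟨X, hX, by rwa [Finset.piecewise_insert]⟩
      · refine ⟨X + M a, A.add_mem hX (hM a), ?_⟩
        have hcol : ∀ j, (N + (X + M a)).col j = (N + X).col j + (M a).col j := fun j => by
          ext; simp [add_assoc]
        rw [Finset.piecewise_eq_of_notMem _ _ _ fun ha => (hs a ha).false] at h
        have hleft : ∀ j ∈ s, (N + (X + M a)).col j = (N + X).col j := fun j hj => by
          rw [hcol, hM0 a j (hs j hj), add_zero]
        rwa [Finset.piecewise_insert, s.piecewise_congr hleft fun _ _ => rfl, hcol]
  obtain ⟨X, hX, hLI⟩ := hpartial Finset.univ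
  refine ⟨X, hX, ?_⟩
  rw [Matrix.rank_eq_finrank_span_cols, ← Fintype.card_coe, ← finrank_span_eq_card hLI]
  refine Submodule.finrank_mono (Submodule.span_mono ?_)
  rintro _ ⟨j, rfl⟩
  exact ⟨j, by rw [Finset.piecewise_eq_of_mem _ _ _ (Finset.mem_univ j)]⟩

end Rank

section Pivots

variable {ι κ K : Type*} [Field K] [LinearOrder ι] [LinearOrder κ] [Fintype ι] [Fintype κ]

open Classical in
/-- The pivots of a space `A` of matrices: the positions `(i, j)` such that some member of `A` has
`j` as its first nonzero column, and `i` as the first nonzero entry of that column. -/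
noncomputable def pivots (A : Submodule K (Matrix ι κ K)) : Finset (ι × κ) :=
  {x | ∃ M ∈ A, IsLeading M.col x.2 ∧ IsLeading (M.col x.2) x.1}

theorem mem_pivots {A : Submodule K (Matrix ι κ K)} {i : ι} {j : κ} :
    (i, j) ∈ pivots A ↔ ∃ M ∈ A, IsLeading M.col j ∧ IsLeading (M.col j) i := by
  simp [pivots]

theorem finrank_le_card_pivots (A : Submodule K (Matrix ι κ K)) :
    finrank K A ≤ (pivots A).card := by
  let ev : A →ₗ[K] pivots A → K :=
    LinearMap.pi fun x => Matrix.entryLinearMap K K x.1.1 x.1.2 ∘ₗ A.subtype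
  have hev : Function.Injective ev := by
    rw [← LinearMap.ker_eq_bot, LinearMap.ker_eq_bot']
    intro M hM
    by_contra hne
    obtain ⟨j, hj⟩ := exists_isLeading (x := M.1.col) fun h =>
      hne (Subtype.ext (Matrix.ext fun i j => congrFun (congrFun h j) i))
    obtain ⟨i, hi⟩ := exists_isLeading hj.1
    exact hi.1 (congrFun hM ⟨(i, j), mem_pivots.2 ⟨M.1, M.2, hj, hi⟩⟩)
  simpa using LinearMap.finrank_le_finrank_of_injective hev

theorem exists_card_pivots_le_rank_add (A : Submodule K (Matrix ι κ K)) (σ : κ ↪ ι)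
    (N : Matrix ι κ K) :
    ∃ X ∈ A, Finset.card {j | (σ j, j) ∈ pivots A} ≤ (N + X).rank := by
  have hpivot : ∀ j : ({j | (σ j, j) ∈ pivots A} : Finset κ),
      ∃ M ∈ A, IsLeading M.col j ∧ IsLeading (M.col j) (σ j) := fun j =>
    mem_pivots.1 (Finset.mem_filter.1 j.2).2
  choose M hM hcol hentry using hpivot
  exact exists_card_le_rank_add hM (fun j => (hcol j).2)
    (linearIndependent_of_isLeading (σ.injective.comp Subtype.val_injective) hentry) N

theorem exists_col_eq_of_pivots {A : Submodule K (Matrix ι κ K)} {j : κ}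
    (hj : ∀ i, (i, j) ∈ pivots A) (w : ι → K) : ∃ M ∈ A, M.col j = w := by
  have htop : A.map (LinearMap.pi fun i => Matrix.entryLinearMap K K i j) = ⊤ :=
    eq_top_of_forall_isLeading fun i => by
      obtain ⟨M, hM, -, hi⟩ := mem_pivots.1 (hj i)
      exact ⟨M.col j, ⟨M, hM, rfl⟩, hi⟩
  exact Submodule.mem_map.1 (htop ▸ Submodule.mem_top (x := w))

theorem exists_row_eq_of_pivots {A : Submodule K (Matrix ι κ K)} {i : ι}
    (hi : ∀ j, (i, j) ∈ pivots A) (w : κ → K) : ∃ M ∈ A, M.row i = w := by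
  have htop : A.map (LinearMap.pi fun j => Matrix.entryLinearMap K K i j) = ⊤ :=
    eq_top_of_forall_isLeading fun j => by
      obtain ⟨M, hM, hcol, hentry⟩ := mem_pivots.1 (hi j)
      exact ⟨M.row i, ⟨M, hM, rfl⟩, hentry.1, fun k hk => congrFun (hcol.2 k hk) i⟩
  exact Submodule.mem_map.1 (htop ▸ Submodule.mem_top (x := w))

end Pivots

section Transversal

theorem exists_embedding_extending {α β : Type*} [Fintype α] [DecidableEq β] {s : Finset α}
    {f : α → β} {T : Finset β}
    (hf : Set.InjOn f s) (hfT : s.image f ⊆ T) (hT : Fintype.card α ≤ T.card) :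
    ∃ σ : α ↪ β, (∀ l ∈ s, σ l = f l) ∧ ∀ l, σ l ∈ T := by
  obtain ⟨T', hfT', hT'T, hT'⟩ := Finset.exists_subsuperset_card_eq hfT
    (Finset.card_image_le.trans s.card_le_univ) hT
  obtain ⟨g, hg⟩ := Finset.exists_equiv_extend_of_card_eq hT'.symm hfT' hf
  exact ⟨g.toEmbedding.trans (.subtype _), hg, fun l => hT'T (g l).2⟩

variable {G κ : Type*} [AddGroup G] [Fintype G] [Fintype κ] [DecidableEq G] [DecidableEq κ]
  {P : Finset (G × κ)} {a : ℕ}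

theorem sum_card_filter_add_mem (P : Finset (G × κ)) (σ : κ → G) :
    ∑ c, Finset.card {j | (c + σ j, j) ∈ P} = P.card := by
  simp only [Finset.card_filter]
  rw [Finset.sum_comm, ← Finset.filter_univ_mem P, Finset.card_filter,
    Fintype.sum_prod_type_right]
  simp only [Finset.mem_filter_univ]
  exact Finset.sum_congr rfl fun j _ =>
    Equiv.sum_comp (Equiv.addRight (σ j)) fun i => if (i, j) ∈ P then 1 else 0

theorem card_le_mul_of_forall_embedding (σ : κ ↪ G)
    (hP : ∀ σ : κ ↪ G, Finset.card {j | (σ j, j) ∈ P} ≤ a) :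
    P.card ≤ Fintype.card G * a := by
  rw [← sum_card_filter_add_mem P σ]
  simpa using Finset.sum_le_card_nsmul Finset.univ _ a fun c _ =>
    hP (σ.trans (Equiv.addLeft c).toEmbedding)

theorem card_filter_embedding_eq (hcard : Fintype.card G * a ≤ P.card)
    (hP : ∀ σ : κ ↪ G, Finset.card {j | (σ j, j) ∈ P} ≤ a) (σ : κ ↪ G) :
    Finset.card {j | (σ j, j) ∈ P} = a := by
  refine (hP σ).antisymm (not_lt.1 fun hlt => hcard.not_gt ?_)
  rw [← sum_card_filter_add_mem P σ]
  simpa using Finset.sum_lt_sum (fun c _ => hP (σ.trans (Equiv.addLeft c).toEmbedding))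
    ⟨0, Finset.mem_univ 0, by simpa using hlt⟩

theorem exists_mem_of_exchange (hcard : Fintype.card G * a ≤ P.card)
    (hP : ∀ σ : κ ↪ G, Finset.card {j | (σ j, j) ∈ P} ≤ a) {σ : κ ↪ G} {i : G}
    {j : κ} (hij : (σ j, j) ∈ P) (hi : (i, j) ∉ P) : ∃ l, σ l = i ∧ (σ j, l) ∈ P := by
  by_contra! hl
  let τ : κ ↪ G := σ.trans (Equiv.swap (σ j) i).toEmbedding
  have hτ : ∀ l, τ l = Equiv.swap (σ j) i (σ l) := fun _ => rfl
  have hτj : τ j = i := by rw [hτ, Equiv.swap_apply_left]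
  have hlt : Finset.card {l | (τ l, l) ∈ P} <
      Finset.card {l | (σ l, l) ∈ P} := by
    refine Finset.card_lt_card (Finset.ssubset_iff_of_subset ?_ |>.2
      ⟨j, by simpa using hij, by simpa [hτj] using hi⟩)
    intro l hmem
    simp only [Finset.mem_filter_univ] at hmem ⊢
    by_cases hlj : l = j
    · rwa [hlj]
    by_cases hli : σ l = i
    · rw [hτ, hli, Equiv.swap_apply_right] at hmem
      exact absurd hmem (hl l hli)
    · rwa [hτ, Equiv.swap_apply_of_ne_of_ne (σ.injective.ne hlj) hli] at hmem
  rw [card_filter_embedding_eq hcard hP, card_filter_embedding_eq hcard hP] at hlt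
  exact hlt.false

theorem card_eq_and_row_subset_of_exchange (hκ : Fintype.card κ ≤ Fintype.card G)
    (hcard : Fintype.card G * a ≤ P.card)
    (hP : ∀ σ : κ ↪ G, Finset.card {j | (σ j, j) ∈ P} ≤ a) {i i' : G} {j : κ}
    (hij : (i, j) ∈ P) (hi' : (i', j) ∉ P) :
    Fintype.card κ = Fintype.card G ∧ ∀ l, (i, l) ∈ P := by
  have hne : i ≠ i' := fun h => hi' (h ▸ hij)
  refine ⟨hκ.antisymm (not_lt.1 fun hlt => ?_), fun j' => ?_⟩
  · obtain ⟨σ, hσ, hσi'⟩ := exists_embedding_extending (s := {j}) (f := fun _ => i)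
      (T := Finset.univ.erase i') (by simp) (by simp [hne])
      (by rw [Finset.card_erase_of_mem (Finset.mem_univ i'), Finset.card_univ]; omega)
    have hσj : σ j = i := hσ j (by simp)
    obtain ⟨l, hl, -⟩ := exists_mem_of_exchange hcard hP (hσj.symm ▸ hij) hi'
    exact (Finset.mem_erase.1 (hσi' l)).1 hl
  · obtain rfl | hj' := eq_or_ne j' j
    · exact hij
    obtain ⟨σ, hσ, -⟩ := exists_embedding_extending (s := {j, j'})
      (f := Function.update (fun _ => i') j i) (T := Finset.univ)
      (by simp [Set.InjOn, hj', hj'.symm, hne, hne.symm]) (Finset.subset_univ _) hκ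
    have hσj : σ j = i := by simpa using hσ j (by simp)
    have hσj' : σ j' = i' := by simpa [hj'] using hσ j' (by simp)
    obtain ⟨l, hl, hmem⟩ := exists_mem_of_exchange hcard hP (hσj.symm ▸ hij) hi'
    rwa [σ.injective (hl.trans hσj'.symm), hσj] at hmem

theorem exists_full_column_or_full_row (hκ : Fintype.card κ ≤ Fintype.card G)
    (hcard : Fintype.card G * a ≤ P.card) (ha : 0 < a)
    (hP : ∀ σ : κ ↪ G, Finset.card {j | (σ j, j) ∈ P} ≤ a) :
    (∃ j, ∀ i, (i, j) ∈ P) ∨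
      (Fintype.card κ = Fintype.card G ∧ ∃ i, ∀ j, (i, j) ∈ P) := by
  obtain ⟨⟨i, j⟩, hij⟩ : P.Nonempty :=
    Finset.card_pos.1 (hcard.trans_lt' (Nat.mul_pos Fintype.card_pos ha))
  by_cases hj : ∀ i', (i', j) ∈ P
  · exact .inl ⟨j, hj⟩
  · obtain ⟨i', hi'⟩ := not_forall.1 hj
    obtain ⟨heq, hrow⟩ := card_eq_and_row_subset_of_exchange hκ hcard hP hij hi'
    exact .inr ⟨heq, i, hrow⟩

end Transversal

section Flanders

variable {K : Type*} [Field K] {p q a : ℕ}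

theorem finrank_le_of_rank_add_le (hqp : q ≤ p) {A : Submodule K (Matrix (Fin p) (Fin q) K)}
    (N : Matrix (Fin p) (Fin q) K) (hA : ∀ X ∈ A, (N + X).rank ≤ a) : finrank K A ≤ p * a := by
  obtain _ | p := p
  · simpa using Subsingleton.elim A ⊥
  refine (finrank_le_card_pivots A).trans ?_
  simpa using card_le_mul_of_forall_embedding (Fin.castLEEmb hqp) fun σ =>
    let ⟨X, hX, hle⟩ := exists_card_pivots_le_rank_add A σ N
    hle.trans (hA X hX)

theorem finrank_le_of_rank_le (hqp : q ≤ p) {A : Submodule K (Matrix (Fin p) (Fin q) K)}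
    (hA : ∀ X ∈ A, X.rank ≤ a) : finrank K A ≤ p * a :=
  finrank_le_of_rank_add_le hqp 0 (by simpa using hA)

theorem exists_full_col_or_row_of_rank_le (hqp : q ≤ p)
    {A : Submodule K (Matrix (Fin p) (Fin q) K)} (hA : ∀ X ∈ A, X.rank ≤ a)
    (hfin : finrank K A = p * a) (hpos : 0 < p * a) :
    (∃ j, ∀ w, ∃ M ∈ A, M.col j = w) ∨ (q = p ∧ ∃ i, ∀ w, ∃ M ∈ A, M.row i = w) := by
  obtain _ | p := p
  · simp at hpos
  have hhits : ∀ σ : Fin q ↪ Fin (p + 1),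
      Finset.card {j | (σ j, j) ∈ pivots A} ≤ a := fun σ => by
    obtain ⟨X, hX, hle⟩ := exists_card_pivots_le_rank_add A σ 0
    exact hle.trans (by simpa using hA X hX)
  have hcard : Fintype.card (Fin (p + 1)) * a ≤ (pivots A).card := by
    simpa [← hfin] using finrank_le_card_pivots A
  obtain ⟨j, hj⟩ | ⟨heq, i, hi⟩ := exists_full_column_or_full_row (by simpa using hqp) hcard
    (pos_of_mul_pos_right hpos (Nat.zero_le _)) hhits
  · exact .inl ⟨j, exists_col_eq_of_pivots hj⟩
  · exact .inr ⟨by simpa using heq, i, exists_row_eq_of_pivots hi⟩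

end Flanders

section Dimension

variable {K V W : Type*} [Field K] [AddCommGroup V] [Module K V] [AddCommGroup W] [Module K W]

theorem finrank_map_add_finrank_inf_ker [FiniteDimensional K V] (f : V →ₗ[K] W)
    (S : Submodule K V) :
    finrank K (S.map f) + finrank K (S ⊓ LinearMap.ker f : Submodule K V) = finrank K S := by
  rw [← LinearMap.range_domRestrict, ← Submodule.map_comap_subtype,
    Submodule.finrank_map_subtype_eq, ← LinearMap.ker_domRestrict,
    LinearMap.finrank_range_add_finrank_ker]

theorem finrank_pi_univ {ι : Type*} [Fintype ι] {V : ι → Type*} [∀ i, AddCommGroup (V i)]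
    [∀ i, Module K (V i)] [∀ i, FiniteDimensional K (V i)] (S : ∀ i, Submodule K (V i)) :
    finrank K (Submodule.pi Set.univ S) = ∑ i, finrank K (S i) := by
  let e : Submodule.pi Set.univ S ≃ₗ[K] ∀ i, S i :=
    { toFun := fun x i => ⟨x.1 i, x.2 i trivial⟩
      invFun := fun x => ⟨fun i => x i, fun i _ => (x i).2⟩
      map_add' := fun _ _ => rfl
      map_smul' := fun _ _ => rfl }
  rw [e.finrank_eq, finrank_pi_fintype]

end Dimension

section Dyads

variable {ι κ K : Type*} [Field K]

/-- The vectors `φ` for which the dyad `w φᵀ` lies in the space `B` of matrices. -/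
def dyads (B : Submodule K (Matrix ι κ K)) (w : ι → K) : Submodule K (κ → K) :=
  B.comap (vecMulVecBilin K K w)

theorem mem_dyads {B : Submodule K (Matrix ι κ K)} {w : ι → K} {φ : κ → K} :
    φ ∈ dyads B w ↔ Matrix.vecMulVec w φ ∈ B :=
  Iff.rfl

theorem pi_dyads_single_le [Finite ι] [DecidableEq ι] (B : Submodule K (Matrix ι κ K)) :
    (Submodule.pi Set.univ fun i => dyads B (Pi.single i 1) : Submodule K (Matrix ι κ K)) ≤ B := by
  have := Fintype.ofFinite ι
  intro (M : Matrix ι κ K) hM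
  have hsum : M = ∑ i, Matrix.vecMulVec (Pi.single i 1) (M.row i) := by
    ext i j
    simp [Matrix.sum_apply, Matrix.vecMulVec_apply, Pi.single_apply]
  rw [hsum]
  exact B.sum_mem fun i _ => mem_dyads.1 (hM i trivial)

theorem rank_le_of_le_finrank_dyads [Fintype ι] [Fintype κ] {B : Submodule K (Matrix ι κ K)}
    {a : ℕ} (hdyads : ∀ w ≠ 0, a ≤ finrank K (dyads B w)) (hB : finrank K B ≤ Fintype.card ι * a) :
    ∀ b ∈ B, b.rank ≤ a := by
  classical
  let P : Submodule K (Matrix ι κ K) := Submodule.pi Set.univ fun i => dyads B (Pi.single i 1)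
  have hPB : P ≤ B := pi_dyads_single_le B
  have hle : ∀ i ∈ Finset.univ, a ≤ finrank K (dyads B (Pi.single i 1)) := fun i _ =>
    hdyads _ (by simp)
  have hP : finrank K P = ∑ i, finrank K (dyads B (Pi.single i 1)) := finrank_pi_univ _
  replace hB : finrank K B ≤ ∑ _i : ι, a := by simpa using hB
  have haP : ∑ _i : ι, a ≤ finrank K P := hP ▸ Finset.sum_le_sum hle
  have hrows : P = B := Submodule.eq_of_le_of_finrank_le hPB (hB.trans haP)
  have hdim := (Finset.sum_eq_sum_iff_of_le hle).1
    ((haP.antisymm ((Submodule.finrank_mono hPB).trans hB)).trans hP)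
  -- All slices coincide: `1 φᵀ ∈ B` forces `φ` into each of them, and the dimensions agree.
  obtain hι | hι := isEmpty_or_nonempty ι
  · exact fun b _ => b.rank_le_card_height.trans (by simp)
  have hone : ∀ i, dyads B 1 = dyads B (Pi.single i 1) := by
    refine fun i => Submodule.eq_of_le_of_finrank_le (fun φ hφ => ?_)
      ((hdim i (Finset.mem_univ i)).ge.trans (hdyads 1 one_ne_zero))
    have hmem : Matrix.vecMulVec 1 φ ∈ P := hrows ▸ mem_dyads.1 hφ
    have hrow : (Matrix.vecMulVec 1 φ).row i = φ := by ext; simp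
    exact hrow ▸ hmem i trivial
  intro b hb
  rw [b.rank_eq_finrank_span_row]
  obtain ⟨i₀⟩ := hι
  have hspan : Submodule.span K (Set.range b.row) ≤ dyads B (Pi.single i₀ 1) := by
    rw [Submodule.span_le, Set.range_subset_iff, ← hone i₀]
    exact fun i => hone i ▸ (hrows ▸ hb : b ∈ P) i trivial
  exact (Submodule.finrank_mono hspan).trans (hdim i₀ (Finset.mem_univ i₀)).ge

end Dyads

section ColumnDeletion

variable {K : Type*} [Field K] {p q a : ℕ}

theorem exists_matrix_mulVec_eq_zero_iff {w : Fin (p + 1) → K} (hw : w ≠ 0) :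
    ∃ Q : Matrix (Fin p) (Fin (p + 1)) K, ∀ v, Q.mulVec v = 0 ↔ v ∈ Submodule.span K {w} := by
  have hdim : finrank K ((Fin (p + 1) → K) ⧸ Submodule.span K {w}) = finrank K (Fin p → K) := by
    have := Submodule.finrank_quotient_add_finrank (Submodule.span K {w})
    rw [finrank_span_singleton hw] at this
    simpa using this
  let f := (LinearEquiv.ofFinrankEq _ _ hdim).toLinearMap ∘ₗ (Submodule.span K {w}).mkQ
  refine ⟨LinearMap.toMatrix' f, fun v => ?_⟩
  simp [LinearMap.toMatrix'_mulVec, f]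

theorem rank_mul_lt_of_col {ι κ μ : Type*} [Fintype ι] [Fintype κ] (Q : Matrix μ ι K)
    {M : Matrix ι κ K} {j : κ} (hM : M.col j ≠ 0) (hQ : Q.mulVec (M.col j) = 0) :
    (Q * M).rank < M.rank := by
  classical
  have hker : LinearMap.ker M.mulVecLin < LinearMap.ker (Q * M).mulVecLin := by
    rw [Matrix.mulVecLin_mul]
    refine lt_of_le_of_ne (LinearMap.ker_le_ker_comp _ _) fun h => hM ?_
    have hmem : Pi.single j 1 ∈ LinearMap.ker (Q.mulVecLin ∘ₗ M.mulVecLin) := by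
      simpa using hQ
    simpa [← h] using hmem
  have hrank := M.mulVecLin.finrank_range_add_finrank_ker
  have hrank' := (Q * M).mulVecLin.finrank_range_add_finrank_ker
  have hlt := Submodule.finrank_lt_finrank_of_lt hker
  rw [Matrix.rank, Matrix.rank]
  omega

theorem exists_vecMulVec_eq_of_col_mem_span {ι κ : Type*} {w : ι → K} {M : Matrix ι κ K}
    (hM : ∀ j, M.col j ∈ Submodule.span K {w}) : ∃ φ, Matrix.vecMulVec w φ = M := by
  choose φ hφ using fun j => Submodule.mem_span_singleton.1 (hM j)
  refine ⟨φ, Matrix.ext fun i j => ?_⟩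
  simpa [Matrix.vecMulVec_apply, mul_comm] using congrFun (hφ j) i

/-- The subspace of the matrices in `A` whose column `j` vanishes. -/
def colKernel {ι κ : Type*} (A : Submodule K (Matrix ι κ K)) (j : κ) :
    Submodule K (Matrix ι κ K) :=
  A ⊓ LinearMap.ker (LinearMap.pi fun i => Matrix.entryLinearMap K K i j)

theorem mem_colKernel {ι κ : Type*} {A : Submodule K (Matrix ι κ K)} {j : κ} {M : Matrix ι κ K} :
    M ∈ colKernel A j ↔ M ∈ A ∧ M.col j = 0 :=
  Iff.rfl

theorem finrank_colKernel {ι κ : Type*} [Fintype ι] [Finite κ] {A : Submodule K (Matrix ι κ K)}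
    {j : κ} (hj : ∀ w, ∃ M ∈ A, M.col j = w) :
    Fintype.card ι + finrank K (colKernel A j) = finrank K A := by
  have htop : A.map (LinearMap.pi fun i => Matrix.entryLinearMap K K i j) = ⊤ :=
    Submodule.eq_top_iff'.2 fun w => Submodule.mem_map.2 (hj w)
  rw [← finrank_map_add_finrank_inf_ker (LinearMap.pi fun i => Matrix.entryLinearMap K K i j) A,
    htop, finrank_top, finrank_fintype_fun_eq_card, colKernel]

theorem le_finrank_dyads_colKernel (hqp : q ≤ p)
    {A : Submodule K (Matrix (Fin (p + 1)) (Fin (q + 1)) K)}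
    (hA : ∀ M ∈ A, M.rank ≤ a + 1) (hfin : finrank K A = (p + 1) * (a + 1)) {j : Fin (q + 1)}
    (hj : ∀ w, ∃ M ∈ A, M.col j = w) {w : Fin (p + 1) → K} (hw : w ≠ 0) :
    a ≤ finrank K (dyads (colKernel A j) w) := by
  obtain ⟨N, hN, rfl⟩ := hj w
  obtain ⟨Q, hQ⟩ := exists_matrix_mulVec_eq_zero_iff hw
  have hQN : Q.mulVec (N.col j) = 0 := (hQ _).2 (Submodule.mem_span_singleton_self _)
  let T : Matrix (Fin (p + 1)) (Fin (q + 1)) K →ₗ[K] Matrix (Fin p) (Fin q) K :=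
    { toFun := fun M => (Q * M).submatrix id j.succAbove
      map_add' := fun M M' => by rw [Matrix.mul_add, Matrix.submatrix_add]; rfl
      map_smul' := fun c M => by rw [Matrix.mul_smul, Matrix.submatrix_smul]; rfl }
  have hrange : finrank K ((colKernel A j).map T) ≤ p * a := by
    refine finrank_le_of_rank_add_le hqp (T N) ?_
    rintro _ ⟨M, hM, rfl⟩
    rw [← map_add]
    have hcol : (N + M).col j = N.col j := by
      rw [← add_zero (N.col j), ← (mem_colKernel.1 hM).2]
      rfl
    have hlt := rank_mul_lt_of_col Q (M := N + M) (hcol ▸ hw) (hcol ▸ hQN)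
    have := ((Q * (N + M)).rank_submatrix_le id j.succAbove).trans_lt hlt
    exact Nat.lt_succ_iff.1 (this.trans_le (hA _ (A.add_mem hN hM.1)))
  have hker : colKernel A j ⊓ LinearMap.ker T ≤
      (dyads (colKernel A j) (N.col j)).map (vecMulVecBilin K K (N.col j)) := by
    rintro M ⟨hM, hTM⟩
    have hQM : ∀ l, Q.mulVec (M.col l) = 0 := by
      intro l
      obtain rfl | ⟨l, rfl⟩ := j.eq_self_or_eq_succAbove l
      · rw [(mem_colKernel.1 hM).2, Matrix.mulVec_zero]
      · exact funext fun i => congrFun (congrFun hTM i) l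
    obtain ⟨φ, rfl⟩ := exists_vecMulVec_eq_of_col_mem_span fun l => (hQ _).1 (hQM l)
    exact ⟨φ, hM, rfl⟩
  have hker' := (Submodule.finrank_mono hker).trans (Submodule.finrank_map_le _ _)
  have hcol := finrank_colKernel hj
  have hsplit := finrank_map_add_finrank_inf_ker T (colKernel A j)
  rw [Fintype.card_fin] at hcol
  linarith

theorem exists_le_finrank_eq_of_full_col (hqp : q ≤ p)
    {A : Submodule K (Matrix (Fin (p + 1)) (Fin (q + 1)) K)}
    (hA : ∀ M ∈ A, M.rank ≤ a + 1) (hfin : finrank K A = (p + 1) * (a + 1)) {j : Fin (q + 1)}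
    (hj : ∀ w, ∃ M ∈ A, M.col j = w) :
    ∃ B ≤ A, finrank K B = (p + 1) * a ∧ ∀ M ∈ B, M.rank ≤ a := by
  have hdim : finrank K (colKernel A j) = (p + 1) * a := by
    have := finrank_colKernel hj
    rw [Fintype.card_fin] at this
    lia
  exact ⟨colKernel A j, inf_le_left, hdim, rank_le_of_le_finrank_dyads
    (fun w hw => le_finrank_dyads_colKernel hqp hA hfin hj hw) (by simpa using hdim.le)⟩

theorem exists_le_finrank_eq_of_full_row
    {A : Submodule K (Matrix (Fin (p + 1)) (Fin (p + 1)) K)}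
    (hA : ∀ M ∈ A, M.rank ≤ a + 1) (hfin : finrank K A = (p + 1) * (a + 1)) {i : Fin (p + 1)}
    (hi : ∀ w, ∃ M ∈ A, M.row i = w) :
    ∃ B ≤ A, finrank K B = (p + 1) * a ∧ ∀ M ∈ B, M.rank ≤ a := by
  let e := Matrix.transposeLinearEquiv (Fin (p + 1)) (Fin (p + 1)) K K
  obtain ⟨B, hBA, hB, hrank⟩ := exists_le_finrank_eq_of_full_col le_rfl
    (A := A.map e.toLinearMap) (a := a) (j := i)
    (by rintro _ ⟨M, hM, rfl⟩; simpa [e] using hA M hM)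
    (by rw [LinearEquiv.finrank_map_eq, hfin])
    (fun w => let ⟨M, hM, hw⟩ := hi w; ⟨M.transpose, ⟨M, hM, rfl⟩, hw⟩)
  refine ⟨B.map e.symm.toLinearMap, ?_, by rw [LinearEquiv.finrank_map_eq, hB], ?_⟩
  · rintro _ ⟨M, hM, rfl⟩
    obtain ⟨N, hN, rfl⟩ := hBA hM
    simpa [e] using hN
  · rintro _ ⟨M, hM, rfl⟩
    simpa [e] using hrank M hM

/-- Together with `finrank_le_of_rank_le`, this says that an optimal anticode of maximum rank
`a + 1` contains one of maximum rank `a`. -/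
theorem exists_le_finrank_eq_of_rank_le (hqp : q ≤ p) {A : Submodule K (Matrix (Fin p) (Fin q) K)}
    (hA : ∀ M ∈ A, M.rank ≤ a + 1) (hfin : finrank K A = p * (a + 1)) :
    ∃ B ≤ A, finrank K B = p * a ∧ ∀ M ∈ B, M.rank ≤ a := by
  obtain _ | q := q
  · have hp : p * (a + 1) = 0 := by rw [← hfin]; simpa using Subsingleton.elim A ⊥
    obtain rfl : p = 0 := by simpa using hp
    exact ⟨⊥, bot_le, by simp, by simp⟩
  obtain _ | p := p
  · omega
  obtain ⟨j, hj⟩ | ⟨heq, i, hi⟩ := exists_full_col_or_row_of_rank_le hqp hA hfin (by positivity)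
  · exact exists_le_finrank_eq_of_full_col (Nat.le_of_succ_le_succ hqp) hA hfin hj
  · obtain rfl : q = p := Nat.succ_injective heq
    exact exists_le_finrank_eq_of_full_row hA hfin hi

end ColumnDeletion

/-! ### Weights of codes -/

section Supported

variable {ι κ K : Type*} [Field K] [DecidableEq κ]

/-- The space of matrices whose columns outside `s` vanish, an optimal anticode of maximum rank
`#s` as soon as there are at least as many rows as columns. -/
def colSupported (s : Finset κ) : Submodule K (Matrix ι κ K) :=
  Submodule.pi Set.univ fun _ => Submodule.pi Set.univ fun j => if j ∈ s then ⊤ else ⊥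

theorem colSupported_mono {s s' : Finset κ} (hs : s ⊆ s') :
    (colSupported s : Submodule K (Matrix ι κ K)) ≤ colSupported s' := by
  refine Submodule.pi_mono fun _ _ => Submodule.pi_mono fun j _ => ?_
  by_cases hj : j ∈ s
  · simp [hj, hs hj]
  · simp [hj]

theorem finrank_pi_ite_mem [Finite κ] (s : Finset κ) :
    finrank K (Submodule.pi Set.univ fun j => if j ∈ s then (⊤ : Submodule K K) else ⊥) =
      s.card := by
  have := Fintype.ofFinite κ
  rw [finrank_pi_univ]
  simp [apply_ite (fun S : Submodule K K => finrank K S)]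

theorem finrank_colSupported [Fintype ι] [Finite κ] (s : Finset κ) :
    finrank K (colSupported s : Submodule K (Matrix ι κ K)) = Fintype.card ι * s.card := by
  refine (finrank_pi_univ (K := K) (ι := ι) fun _ => Submodule.pi Set.univ fun j =>
    if j ∈ s then (⊤ : Submodule K K) else ⊥).trans ?_
  simp [finrank_pi_ite_mem]

theorem rank_le_card_of_mem_colSupported [Finite ι] [Fintype κ] {s : Finset κ} {M : Matrix ι κ K}
    (hM : M ∈ colSupported s) : M.rank ≤ s.card := by
  rw [M.rank_eq_finrank_span_row, ← finrank_pi_ite_mem (K := K)]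
  refine Submodule.finrank_mono (Submodule.span_le.2 (Set.range_subset_iff.2 fun i => ?_))
  exact hM i trivial

end Supported

section Anticode

variable {K : Type*} [Field K] {p q a : ℕ} {A : Submodule K (Matrix (Fin p) (Fin q) K)}

theorem rank_le_maxrank {M : Matrix (Fin p) (Fin q) K} (hM : M ∈ A) : M.rank ≤ maxrank A :=
  le_csSup ⟨q, by rintro _ ⟨N, -, rfl⟩; exact N.rank_le_width⟩ ⟨M, hM, rfl⟩

theorem exists_rank_eq_maxrank (A : Submodule K (Matrix (Fin p) (Fin q) K)) :
    ∃ M ∈ A, M.rank = maxrank A :=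
  Nat.sSup_mem (s := {w | ∃ M ∈ A, M.rank = w}) ⟨_, 0, A.zero_mem, rfl⟩
    ⟨q, by rintro _ ⟨N, -, rfl⟩; exact N.rank_le_width⟩

theorem maxrank_le (hA : ∀ M ∈ A, M.rank ≤ a) : maxrank A ≤ a := by
  obtain ⟨M, hM, hrank⟩ := exists_rank_eq_maxrank A
  exact hrank ▸ hA M hM

theorem isOptAnticode_of_rank_le (hqp : q ≤ p) (hA : ∀ M ∈ A, M.rank ≤ a)
    (hfin : finrank K A = p * a) : IsOptAnticode A :=
  (finrank_le_of_rank_le hqp fun _ => rank_le_maxrank).antisymm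
    (hfin ▸ Nat.mul_le_mul_left p (maxrank_le hA))

end Anticode

/-- The ambient space `𝕄` of sum-rank metric codes. -/
abbrev SumRankSpace {t : ℕ} (K : Type*) (m n : Fin t → ℕ) : Type _ :=
  ∀ i, Matrix (Fin (m i)) (Fin (n i)) K

section Weight

variable {K : Type*} [Field K] {E E' : Submodule K (SumRankSpace K m n)}
  {A : ∀ i, Submodule K (Matrix (Fin (m i)) (Fin (n i)) K)}

theorem srk_le_maxsrk {x : SumRankSpace K m n} (hx : x ∈ E) : srk x ≤ maxsrk E :=
  le_csSup ⟨∑ i, n i, by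
    rintro _ ⟨y, -, rfl⟩
    exact Finset.sum_le_sum fun i _ => (y i).rank_le_width⟩ ⟨x, hx, rfl⟩

theorem maxsrk_pi (A : ∀ i, Submodule K (Matrix (Fin (m i)) (Fin (n i)) K)) :
    maxsrk (Submodule.pi Set.univ A) = ∑ i, maxrank (A i) := by
  apply le_antisymm
  · refine csSup_le ⟨_, 0, Submodule.zero_mem _, rfl⟩ ?_
    rintro _ ⟨x, hx, rfl⟩
    exact Finset.sum_le_sum fun i _ => rank_le_maxrank (hx i trivial)
  · choose x hx hrank using fun i => exists_rank_eq_maxrank (A i)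
    simpa only [srk, hrank] using srk_le_maxsrk (E := Submodule.pi Set.univ A) (x := x)
      fun i _ => hx i

theorem codeWt_le_sum_maxrank (hA : ∀ i, IsOptAnticode (A i)) (hE : E ≤ Submodule.pi Set.univ A) :
    codeWt E ≤ ∑ i, maxrank (A i) :=
  Nat.sInf_le ⟨A, hA, hE, maxsrk_pi A⟩

theorem isOptAnticode_top {p q : ℕ} (hqp : q ≤ p) :
    IsOptAnticode (⊤ : Submodule K (Matrix (Fin p) (Fin q) K)) :=
  isOptAnticode_of_rank_le hqp (fun M _ => M.rank_le_width) (by simp [finrank_matrix])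

theorem exists_sum_maxrank_eq_codeWt (hmn : n ≤ m) (E : Submodule K (SumRankSpace K m n)) :
    ∃ A : ∀ i, Submodule K (Matrix (Fin (m i)) (Fin (n i)) K), (∀ i, IsOptAnticode (A i)) ∧
      E ≤ Submodule.pi Set.univ A ∧ ∑ i, maxrank (A i) = codeWt E := by
  obtain ⟨A, hA, hEA, hwt⟩ := Nat.sInf_mem (s := {w | ∃ A : ∀ i, Submodule K (Matrix _ _ K),
    (∀ i, IsOptAnticode (A i)) ∧ E ≤ Submodule.pi Set.univ A ∧
      maxsrk (Submodule.pi Set.univ A) = w})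
    ⟨_, fun _ => ⊤, fun i => isOptAnticode_top (hmn i), by simp, rfl⟩
  exact ⟨A, hA, hEA, maxsrk_pi A ▸ hwt⟩

theorem srk_le_codeWt (hmn : n ≤ m) {x : SumRankSpace K m n} (hx : x ∈ E) :
    srk x ≤ codeWt E := by
  obtain ⟨A, -, hEA, hwt⟩ := exists_sum_maxrank_eq_codeWt hmn E
  exact hwt ▸ Finset.sum_le_sum fun i _ => rank_le_maxrank (hEA hx i trivial)

theorem codeWt_mono (hmn : n ≤ m) (hE : E ≤ E') : codeWt E ≤ codeWt E' := by
  obtain ⟨A, hA, hEA, hwt⟩ := exists_sum_maxrank_eq_codeWt hmn E'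
  exact hwt ▸ codeWt_le_sum_maxrank hA (hE.trans hEA)

theorem minDist_le_srk {x : SumRankSpace K m n} (hx : x ∈ E) (hx0 : x ≠ 0) : minDist E ≤ srk x :=
  Nat.sInf_le ⟨x, hx, hx0, rfl⟩

theorem gw_le_codeWt {r : ℕ} (hE : E ≤ E') (hr : r ≤ finrank K E) : gw E' r ≤ codeWt E :=
  Nat.sInf_le ⟨E, hE, hr, rfl⟩

theorem exists_codeWt_eq_gw {r : ℕ} (hr : r ≤ finrank K E) :
    ∃ E' ≤ E, r ≤ finrank K E' ∧ codeWt E' = gw E r :=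
  Nat.sInf_mem (s := {w | ∃ E' ≤ E, r ≤ finrank K E' ∧ codeWt E' = w}) ⟨_, E, le_rfl, hr, rfl⟩

theorem monotone_gw_succ (E : Submodule K (SumRankSpace K m n)) :
    Monotone fun r : Fin (finrank K E) => gw E (r + 1) := fun r s hrs => by
  obtain ⟨E', hE', hs, hwt⟩ := exists_codeWt_eq_gw (E := E) (r := s + 1) s.isLt
  exact (gw_le_codeWt hE' ((Nat.succ_le_succ hrs).trans hs)).trans_eq hwt

end Weight

section Shrink

variable {K : Type*} [Field K]

theorem finrank_add_finrank_le_add_finrank_inf {V : Type*} [AddCommGroup V] [Module K V]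
    [FiniteDimensional K V] {S T U : Submodule K V} (hS : S ≤ U) (hT : T ≤ U) :
    finrank K S + finrank K T ≤ finrank K U + finrank K (S ⊓ T : Submodule K V) := by
  rw [← Submodule.finrank_sup_add_finrank_inf_eq]
  exact Nat.add_le_add_right (Submodule.finrank_mono (sup_le hS hT)) _

theorem sum_update_apply_add {ι R : Type*} [Fintype ι] [DecidableEq ι] [AddCommMonoid R]
    {α : ι → Type*} (x : ∀ i, α i) {i : ι} (y : α i) (f : ∀ i, α i → R) :
    ∑ l, f l (Function.update x i y l) + f i (x i) = ∑ l, f l (x l) + f i y := by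
  have hrest : ∀ l ∈ Finset.univ.erase i, f l (Function.update x i y l) = f l (x l) :=
    fun l hl => by rw [Function.update_of_ne (Finset.ne_of_mem_erase hl)]
  rw [← Finset.add_sum_erase _ _ (Finset.mem_univ i),
    ← Finset.add_sum_erase _ _ (Finset.mem_univ i), Finset.sum_congr rfl hrest,
    Function.update_self]
  abel

theorem exists_pos_maxrank_of_lt {A : ∀ i, Submodule K (Matrix (Fin (m i)) (Fin (n i)) K)}
    {j : Fin t} (hj : ∑ i ∈ Finset.Iio j, n i < ∑ i, maxrank (A i)) :
    ∃ i, j ≤ i ∧ 0 < maxrank (A i) := by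
  by_contra! hzero
  refine hj.not_ge ?_
  rw [← Finset.sum_subset (Finset.subset_univ (Finset.Iio j)) fun i _ hi =>
    Nat.le_zero.1 (hzero i (by simpa using hi))]
  exact Finset.sum_le_sum fun i _ => maxrank_le fun M _ => M.rank_le_width

theorem exists_le_codeWt_lt (hm : Antitone m) (hmn : n ≤ m)
    {E : Submodule K (SumRankSpace K m n)} {j : Fin t}
    (hj : ∑ i ∈ Finset.Iio j, n i < codeWt E) :
    ∃ E' ≤ E, finrank K E ≤ finrank K E' + m j ∧ codeWt E' < codeWt E := by
  obtain ⟨A, hA, hEA, hwt⟩ := exists_sum_maxrank_eq_codeWt hmn E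
  obtain ⟨i, hji, hi⟩ := exists_pos_maxrank_of_lt (hwt.symm ▸ hj)
  obtain ⟨a, ha⟩ := Nat.exists_eq_succ_of_ne_zero hi.ne'
  have hAi : finrank K (A i) = m i * (a + 1) := (hA i).trans (by rw [ha])
  obtain ⟨B, hBA, hB, hrank⟩ := exists_le_finrank_eq_of_rank_le (hmn i)
    (fun M hM => (rank_le_maxrank hM).trans ha.le) hAi
  have hA' : ∀ l, IsOptAnticode (Function.update A i B l) := by
    refine (Function.forall_update_iff A fun _ => IsOptAnticode).2 ⟨?_, fun l _ => hA l⟩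
    exact isOptAnticode_of_rank_le (hmn i) hrank hB
  have hA'A : Submodule.pi Set.univ (Function.update A i B) ≤ Submodule.pi Set.univ A :=
    Submodule.pi_mono fun l _ => update_le_self_iff.2 hBA l
  have hfin := sum_update_apply_add A B fun l S => finrank K S
  rw [hAi, hB, ← finrank_pi_univ, ← finrank_pi_univ] at hfin
  have hsum := sum_update_apply_add A B fun l S => maxrank S
  have hBa : maxrank B ≤ a := maxrank_le hrank
  refine ⟨E ⊓ Submodule.pi Set.univ (Function.update A i B), inf_le_left, ?_,
    (codeWt_le_sum_maxrank hA' inf_le_right).trans_lt (by omega)⟩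
  have hinf : finrank K E + finrank K (Submodule.pi Set.univ (Function.update A i B)) ≤
      finrank K (Submodule.pi Set.univ A) + _ :=
    finrank_add_finrank_le_add_finrank_inf hEA hA'A
  have hmi : m i ≤ m j := hm hji
  rw [mul_add_one] at hfin
  omega

theorem gw_lt_gw (hm : Antitone m) (hmn : n ≤ m)
    {E : Submodule K (SumRankSpace K m n)} {j : Fin t} {r s : ℕ} (hrs : r + m j ≤ s)
    (hs : s ≤ finrank K E) (hj : ∑ i ∈ Finset.Iio j, n i < gw E s) : gw E r < gw E s := by
  obtain ⟨E₁, hE₁, hs₁, hwt⟩ := exists_codeWt_eq_gw hs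
  obtain ⟨E₂, hE₂, hfin, hlt⟩ := exists_le_codeWt_lt hm hmn (hwt.symm ▸ hj)
  exact hwt ▸ (gw_le_codeWt (hE₂.trans hE₁) (by omega)).trans_lt hlt

end Shrink

/-! ### Block anticodes and MSRD codes -/

section BlockFill

variable {ι : Type*} [LinearOrder ι] [LocallyFiniteOrderBot ι] {n : ι → ℕ} {g h : ℕ}

/-- Distributes `h` units greedily over blocks of capacities `n i`, filling the blocks in
increasing order. -/
def blockFill (n : ι → ℕ) (h : ℕ) (i : ι) : ℕ :=
  min (n i) (h - ∑ l ∈ Finset.Iio i, n l)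

theorem blockFill_le (i : ι) : blockFill n h i ≤ n i :=
  min_le_left _ _

theorem blockFill_mono (hgh : g ≤ h) (i : ι) : blockFill n g i ≤ blockFill n h i :=
  min_le_min_left _ (Nat.sub_le_sub_right hgh _)

theorem sum_blockFill_le (s : Finset ι) : ∑ i ∈ s, blockFill n h i ≤ h := by
  induction s using Finset.induction_on_max with
  | empty => simp
  | insert a s hs ih =>
    have hprefix : ∑ i ∈ s, blockFill n h i ≤ ∑ i ∈ Finset.Iio a, n i :=
      (Finset.sum_le_sum fun i _ => blockFill_le i).trans
        (Finset.sum_le_sum_of_subset fun i hi => Finset.mem_Iio.2 (hs i hi))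
    have hlast : blockFill n h a ≤ h - ∑ i ∈ Finset.Iio a, n i := min_le_right _ _
    rw [Finset.sum_insert fun ha => lt_irrefl a (hs a ha)]
    omega

theorem exists_prefix_lt_and_le [Fintype ι] (hpos : 0 < h) (hle : h ≤ ∑ i, n i) :
    ∃ j, ∑ i ∈ Finset.Iio j, n i < h ∧ h ≤ ∑ i ∈ Finset.Iio j, n i + n j := by
  suffices hs : ∀ s : Finset ι, h ≤ ∑ i ∈ s, n i →
      ∃ j ∈ s, ∑ i ∈ s with i < j, n i < h ∧ h ≤ ∑ i ∈ s with i < j, n i + n j by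
    obtain ⟨j, -, hj⟩ := hs Finset.univ hle
    have hIio : ({i | i < j} : Finset ι) = Finset.Iio j := by ext; simp
    exact ⟨j, hIio ▸ hj⟩
  intro s
  induction s using Finset.induction_on_max with
  | empty => simpa using hpos.ne'
  | insert a s hs ih =>
    intro hsum
    obtain hle | hlt := le_or_gt h (∑ i ∈ s, n i)
    · obtain ⟨j, hj, hjh⟩ := ih hle
      refine ⟨j, Finset.mem_insert_of_mem hj, ?_⟩
      rwa [Finset.filter_insert, if_neg (hs j hj).not_gt]
    · refine ⟨a, Finset.mem_insert_self a s, ?_⟩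
      rw [Finset.sum_insert fun ha => lt_irrefl a (hs a ha), add_comm] at hsum
      rw [Finset.filter_insert, if_neg (lt_irrefl a), Finset.filter_true_of_mem hs]
      exact ⟨hlt, hsum⟩

theorem sum_Iio_add_le_sum {i : ι} {s : Finset ι} (hs : Finset.Iic i ⊆ s) :
    ∑ l ∈ Finset.Iio i, n l + n i ≤ ∑ l ∈ s, n l := by
  rw [add_comm, ← Finset.sum_insert Finset.notMem_Iio_self, Finset.Iio_insert]
  exact Finset.sum_le_sum_of_subset hs

theorem blockFill_sum [Fintype ι] (i : ι) : blockFill n (∑ l, n l) i = n i :=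
  min_eq_left (Nat.le_sub_of_add_le' (sum_Iio_add_le_sum (Finset.subset_univ _)))

theorem blockFill_prefix_add_of_lt {i j : ι} (hij : i < j) (δ : ℕ) :
    blockFill n (∑ l ∈ Finset.Iio j, n l + δ) i = n i := by
  have hle : ∑ l ∈ Finset.Iio i, n l + n i ≤ ∑ l ∈ Finset.Iio j, n l :=
    sum_Iio_add_le_sum fun l hl => Finset.mem_Iio.2 ((Finset.mem_Iic.1 hl).trans_lt hij)
  exact min_eq_left (by omega)

theorem blockFill_prefix_add_self {j : ι} {δ : ℕ} (hδ : δ ≤ n j) :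
    blockFill n (∑ l ∈ Finset.Iio j, n l + δ) j = δ := by
  rw [blockFill, Nat.add_sub_cancel_left, min_eq_right hδ]

theorem blockFill_prefix_add_of_gt {i j : ι} (hji : j < i) {δ : ℕ} (hδ : δ ≤ n j) :
    blockFill n (∑ l ∈ Finset.Iio j, n l + δ) i = 0 := by
  have hle : ∑ l ∈ Finset.Iio j, n l + n j ≤ ∑ l ∈ Finset.Iio i, n l :=
    sum_Iio_add_le_sum fun l hl => Finset.mem_Iio.2 ((Finset.mem_Iic.1 hl).trans_lt hji)
  rw [blockFill, Nat.sub_eq_zero_of_le (by omega), Nat.min_zero]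

theorem sum_mul_blockFill_prefix_add [Fintype ι] (m : ι → ℕ) {j : ι} {δ : ℕ} (hδ : δ ≤ n j) :
    ∑ i, m i * blockFill n (∑ l ∈ Finset.Iio j, n l + δ) i =
      ∑ i ∈ Finset.Iio j, m i * n i + m j * δ := by
  rw [← Finset.sum_subset (Finset.subset_univ (Finset.Iic j)) fun i _ hi => by
      rw [blockFill_prefix_add_of_gt (not_le.1 fun h => hi (Finset.mem_Iic.2 h)) hδ, mul_zero],
    ← Finset.Iio_insert, Finset.sum_insert Finset.notMem_Iio_self, blockFill_prefix_add_self hδ,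
    add_comm]
  exact congrArg (· + m j * δ) (Finset.sum_congr rfl fun i hi => by
    rw [blockFill_prefix_add_of_lt (Finset.mem_Iio.1 hi)])

end BlockFill

section BlockAnticode

/-- The product of optimal anticodes whose `i`-th factor consists of the matrices supported on the
first `b i` columns. -/
def blockAnticode (K : Type*) [Field K] (m n b : Fin t → ℕ) : Submodule K (SumRankSpace K m n) :=
  Submodule.pi Set.univ fun i => colSupported {j | j.1 < b i}

variable {K : Type*} [Field K] {b c : Fin t → ℕ}

theorem blockAnticode_mono (hbc : b ≤ c) : blockAnticode K m n b ≤ blockAnticode K m n c :=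
  Submodule.pi_mono fun i _ =>
    colSupported_mono (Finset.monotone_filter_right _ fun _ _ hj => hj.trans_le (hbc i))

theorem finrank_blockAnticode (hb : b ≤ n) :
    finrank K (blockAnticode K m n b) = ∑ i, m i * b i := by
  rw [blockAnticode, finrank_pi_univ]
  refine Finset.sum_congr rfl fun i _ => ?_
  rw [finrank_colSupported, Fintype.card_fin, Fin.card_filter_val_lt, min_eq_right (hb i)]

theorem codeWt_le_of_le_blockAnticode (hmn : n ≤ m) (hb : b ≤ n)
    {E : Submodule K (SumRankSpace K m n)} (hE : E ≤ blockAnticode K m n b) :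
    codeWt E ≤ ∑ i, b i := by
  have hcard : ∀ i, ({j | j.1 < b i} : Finset (Fin (n i))).card = b i := fun i => by
    rw [Fin.card_filter_val_lt, min_eq_right (hb i)]
  have hrank : ∀ i, ∀ M ∈ (colSupported {j | j.1 < b i} :
      Submodule K (Matrix (Fin (m i)) (Fin (n i)) K)), M.rank ≤ b i := fun i M hM =>
    (rank_le_card_of_mem_colSupported hM).trans (hcard i).le
  refine (codeWt_le_sum_maxrank (fun i => isOptAnticode_of_rank_le (hmn i) (hrank i) ?_) hE).trans
    (Finset.sum_le_sum fun i _ => maxrank_le (hrank i))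
  rw [finrank_colSupported, Fintype.card_fin, hcard]

theorem codeWt_le_of_le_blockAnticode_blockFill (hmn : n ≤ m) {h : ℕ}
    {E : Submodule K (SumRankSpace K m n)} (hE : E ≤ blockAnticode K m n (blockFill n h)) :
    codeWt E ≤ h :=
  (codeWt_le_of_le_blockAnticode hmn (fun i => blockFill_le i) hE).trans (sum_blockFill_le _)

theorem finrank_sumRankSpace : finrank K (SumRankSpace K m n) = ∑ i, m i * n i := by
  simp [finrank_pi_fintype, finrank_matrix]

end BlockAnticode

section MSRD

variable {K : Type*} [Field K] {D : Submodule K (SumRankSpace K m n)}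

theorem IsMSRD.minDist_pos (hD : IsMSRD D) : 0 < minDist D := by
  obtain ⟨j, δ, -, hdist, -⟩ := hD
  omega

theorem IsMSRD.minDist_le (hD : IsMSRD D) : minDist D ≤ ∑ i, n i := by
  obtain ⟨j, δ, hδ, hdist, -⟩ := hD
  have hle := sum_Iio_add_le_sum (n := n) (Finset.subset_univ (Finset.Iic j))
  omega

theorem IsMSRD.finrank_add_sum_blockFill (hD : IsMSRD D) :
    finrank K D + ∑ i, m i * blockFill n (minDist D - 1) i = ∑ i, m i * n i := by
  obtain ⟨j, δ, hδ, hdist, hfin⟩ := hD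
  have hIci : (Finset.Iio j)ᶜ = Finset.Ici j := by ext; simp
  rw [hdist, Nat.add_sub_cancel, sum_mul_blockFill_prefix_add m (by omega),
    ← Finset.sum_add_sum_compl (Finset.Iio j), hIci, ← hfin]
  ring

end MSRD

/-! ### Weight-adapted bases -/

section Flag

variable {K V : Type*} [Field K] [AddCommGroup V] [Module K V]

theorem linearIndependent_append {a b : ℕ} {v : Fin a → V} {w : Fin b → V}
    (hv : LinearIndependent K v) (hw : LinearIndependent K w)
    (hvw : Disjoint (Submodule.span K (Set.range v)) (Submodule.span K (Set.range w))) :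
    LinearIndependent K (Fin.append v w) := by
  have hsum : Fin.append v w ∘ finSumFinEquiv = Sum.elim v w := by ext (i | i) <;> simp
  exact (linearIndependent_equiv' finSumFinEquiv hsum).1 (hv.sum_type hw hvw)

theorem monotone_append_const {α : Type*} [Preorder α] {a b : ℕ} {x : α} {e : Fin b → α}
    (he : Monotone e) (hx : ∀ i, x ≤ e i) : Monotone (Fin.append (fun _ : Fin a => x) e) := by
  intro i j hij
  induction i using Fin.addCases <;> induction j using Fin.addCases
  · simp
  · simpa using hx _
  · exact absurd (Fin.le_def.1 hij) (by rw [Fin.val_natAdd, Fin.val_castAdd]; omega)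
  · simpa using he (by simpa using hij)

theorem card_filter_append_eq {α : Type*} [DecidableEq α] {a b : ℕ} (d : Fin a → α)
    (e : Fin b → α) (x : α) :
    Finset.card {i | Fin.append d e i = x} =
      Finset.card {i | d i = x} + Finset.card {i | e i = x} := by
  simp only [Finset.card_filter, Fin.sum_univ_add, Fin.append_left, Fin.append_right]

theorem le_of_sup_succ_eq {D W : ℕ → Submodule K V} {a b g h : ℕ}
    (hsup : ∀ h ∈ Set.Ico a b, W h ⊔ D (h + 1) = D h) (hg : g ∈ Set.Icc a h) (hb : h < b) :
    W h ≤ D g := by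
  obtain ⟨hag, hgh⟩ := hg
  induction hgh using Nat.decreasingInduction with
  | self => exact hsup h ⟨hag, hb⟩ ▸ le_sup_left
  | of_succ g hgh ih =>
    exact (ih (Nat.le_succ_of_le hag)).trans (hsup g ⟨hag, hgh.trans hb⟩ ▸ le_sup_right)

theorem exists_linearIndependent_fin (W : Submodule K V) :
    ∃ w : Fin (finrank K W) → V, LinearIndependent K w ∧ ∀ i, w i ∈ W := by
  obtain ⟨w, hw⟩ := exists_linearIndependent_of_le_finrank (R := K) (M := W) le_rfl
  exact ⟨fun i => w i, hw.map' W.subtype W.ker_subtype, fun i => (w i).2⟩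

theorem exists_linearIndependent_of_disjoint_succ [FiniteDimensional K V] {D W : ℕ → Submodule K V}
    {a b : ℕ} (hab : a ≤ b) (hbot : D b = ⊥)
    (hsup : ∀ h ∈ Set.Ico a b, W h ⊔ D (h + 1) = D h)
    (hdisj : ∀ h ∈ Set.Ico a b, Disjoint (W h) (D (h + 1))) :
    ∃ (v : Fin (finrank K (D a)) → V) (e : Fin (finrank K (D a)) → ℕ),
      LinearIndependent K v ∧ Monotone e ∧ (∀ i, e i ∈ Set.Ico a b ∧ v i ∈ W (e i)) ∧
        ∀ x ∈ Set.Ico a b, Finset.card {i | e i = x} = finrank K (W x) := by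
  induction hab using Nat.decreasingInduction with
  | self =>
    rw [hbot, finrank_bot]
    exact ⟨Fin.elim0, Fin.elim0, linearIndependent_empty_type, fun i => i.elim0, fun i => i.elim0,
      fun x hx => absurd hx.1 hx.2.not_ge⟩
  | of_succ a hab ih =>
    have ha : a ∈ Set.Ico a b := ⟨le_rfl, hab⟩
    have hIco : Set.Ico (a + 1) b ⊆ Set.Ico a b := Set.Ico_subset_Ico_left a.le_succ
    obtain ⟨v, e, hv, he, hmem, hcard⟩ :=
      ih (fun h hh => hsup h (hIco hh)) fun h hh => hdisj h (hIco hh)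
    have hdim : finrank K (D a) = finrank K (W a) + finrank K (D (a + 1)) := by
      rw [← Submodule.finrank_sup_add_finrank_inf_eq, hsup a ha, (hdisj a ha).eq_bot, finrank_bot,
        add_zero]
    have hspan : Submodule.span K (Set.range v) ≤ D (a + 1) :=
      Submodule.span_le.2 (Set.range_subset_iff.2 fun i =>
        le_of_sup_succ_eq hsup ⟨a.le_succ, (hmem i).1.1⟩ (hmem i).1.2 (hmem i).2)
    obtain ⟨w, hw, hwW⟩ := exists_linearIndependent_fin (W a)
    have hwspan := Submodule.span_le.2 (Set.range_subset_iff.2 hwW)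
    rw [hdim]
    refine ⟨Fin.append w v, Fin.append (fun _ => a) e,
      linearIndependent_append hw hv ((hdisj a ha).mono hwspan hspan),
      monotone_append_const he fun i => (Nat.lt_of_succ_le (hmem i).1.1).le, fun i => ?_,
      fun x hx => ?_⟩
    · induction i using Fin.addCases with
      | left i => simpa using ⟨hab, hwW i⟩
      | right i => simpa using ⟨hIco (hmem i).1, (hmem i).2⟩
    · rw [card_filter_append_eq]
      obtain rfl | hax := hx.1.eq_or_lt
      · have hne : ∀ i, e i ≠ a := fun i => (Nat.lt_of_succ_le (hmem i).1.1).ne'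
        simp [hne]
      · simp [hax.ne, hcard x ⟨hax, hx.2⟩]

end Flag

theorem finrank_span_image_finset {ι K V : Type*} [Field K] [AddCommGroup V] [Module K V]
    {v : ι → V} (hv : LinearIndependent K v) (s : Finset ι) :
    finrank K (Submodule.span K (v '' s)) = s.card := by
  rw [Set.image_eq_range]
  exact (finrank_span_eq_card (hv.comp _ Subtype.val_injective)).trans (by simp)

section WeightAdapted

variable {K : Type*} [Field K] {k : ℕ} {v : Fin k → SumRankSpace K m n} {d : Fin k → ℕ}

/-- A basis `v` of a code such that the code spanned by its first `r + 1` members has weight at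
most `d r`, while that spanned by its members from the index `r` on has minimum distance at least
`d r`. -/
structure IsWeightAdapted (v : Fin k → SumRankSpace K m n) (d : Fin k → ℕ) : Prop where
  linearIndependent : LinearIndependent K v
  codeWt_span_Iic_le : ∀ r, codeWt (Submodule.span K (v '' Set.Iic r)) ≤ d r
  le_srk : ∀ r, ∀ x ∈ Submodule.span K (v '' Set.Ici r), x ≠ 0 → d r ≤ srk x

namespace IsWeightAdapted

theorem comp (hmn : n ≤ m) (hv : IsWeightAdapted v d) {l : ℕ} {φ : Fin l → Fin k}
    (hφ : StrictMono φ) : IsWeightAdapted (v ∘ φ) (d ∘ φ) where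
  linearIndependent := hv.linearIndependent.comp φ hφ.injective
  codeWt_span_Iic_le r := by
    refine (codeWt_mono hmn (Submodule.span_mono ?_)).trans (hv.codeWt_span_Iic_le (φ r))
    rw [Set.image_comp]
    exact Set.image_mono (Set.image_subset_iff.2 fun i hi => hφ.monotone hi)
  le_srk r x hx := by
    refine hv.le_srk (φ r) x (Submodule.span_mono ?_ hx)
    rw [Set.image_comp]
    exact Set.image_mono (Set.image_subset_iff.2 fun i hi => hφ.monotone hi)

theorem finrank_span (hv : IsWeightAdapted v d) : finrank K (Submodule.span K (Set.range v)) = k :=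
  (finrank_span_eq_card hv.linearIndependent).trans (Fintype.card_fin k)

theorem finrank_span_Ici (hv : IsWeightAdapted v d) (r : Fin k) :
    finrank K (Submodule.span K (v '' Set.Ici r)) = k - r := by
  rw [← Finset.coe_Ici, finrank_span_image_finset hv.linearIndependent, Fin.card_Ici]

theorem finrank_span_val_lt (hv : IsWeightAdapted v d) {r : ℕ} (hr : r ≤ k) :
    finrank K (Submodule.span K (v '' {i | i.1 < r})) = r := by
  rw [← Finset.coe_filter_univ, finrank_span_image_finset hv.linearIndependent,
    Fin.card_filter_val_lt, min_eq_right hr]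

theorem finrank_span_Iic (hv : IsWeightAdapted v d) (r : Fin k) :
    finrank K (Submodule.span K (v '' Set.Iic r)) = r + 1 := by
  rw [← Finset.coe_Iic, finrank_span_image_finset hv.linearIndependent, Fin.card_Iic]

theorem le_codeWt (hmn : n ≤ m) (hv : IsWeightAdapted v d) {r : Fin k}
    {E : Submodule K (SumRankSpace K m n)} (hE : E ≤ Submodule.span K (Set.range v))
    (hr : r < finrank K E) : d r ≤ codeWt E := by
  have hinf := finrank_add_finrank_le_add_finrank_inf hE
    (Submodule.span_mono (Set.image_subset_range v (Set.Ici r)))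
  rw [hv.finrank_span, hv.finrank_span_Ici] at hinf
  obtain ⟨x, hx, hx0⟩ := Submodule.exists_mem_ne_zero_of_ne_bot
    (p := E ⊓ Submodule.span K (v '' Set.Ici r)) fun hbot => by
      rw [hbot, finrank_bot] at hinf
      omega
  exact (hv.le_srk r x hx.2 hx0).trans (srk_le_codeWt hmn hx.1)

theorem gw_eq (hmn : n ≤ m) (hv : IsWeightAdapted v d) (r : Fin k) :
    gw (Submodule.span K (Set.range v)) (r + 1) = d r := by
  apply le_antisymm
  · exact (gw_le_codeWt (Submodule.span_mono (Set.image_subset_range v (Set.Iic r)))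
      (hv.finrank_span_Iic r).ge).trans (hv.codeWt_span_Iic_le r)
  · obtain ⟨E, hE, hr, hwt⟩ := exists_codeWt_eq_gw (K := K)
      (E := Submodule.span K (Set.range v)) (r := r + 1) (by rw [hv.finrank_span]; omega)
    exact hwt ▸ hv.le_codeWt hmn hE hr

theorem codeWt_span_Iic (hmn : n ≤ m) (hv : IsWeightAdapted v d) (r : Fin k) :
    codeWt (Submodule.span K (v '' Set.Iic r)) = d r :=
  (hv.codeWt_span_Iic_le r).antisymm <| hv.le_codeWt hmn
    (Submodule.span_mono (Set.image_subset_range v _)) (by rw [hv.finrank_span_Iic]; omega)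

theorem chainCondition (hmn : n ≤ m) (hv : IsWeightAdapted v d) :
    ChainCondition (Submodule.span K (Set.range v)) := by
  refine ⟨fun r => Submodule.span K (v '' {i | i.1 < r}), by simp, ?_, ?_, ?_⟩
  · rw [hv.finrank_span]
    simp
  · rw [hv.finrank_span]
    intro r hr
    refine Submodule.lt_of_le_of_finrank_lt_finrank
      (Submodule.span_mono (Set.image_mono fun i hi => Nat.lt_succ_of_lt hi)) ?_
    rw [hv.finrank_span_val_lt hr.le, hv.finrank_span_val_lt hr]
    exact r.lt_succ_self
  · rw [hv.finrank_span]
    rintro (_ | r) hr hrk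
    · omega
    · have hIic : {i : Fin k | i.1 < r + 1} = Set.Iic ⟨r, hrk⟩ := by
        ext i
        simp [Fin.le_def]
      beta_reduce
      rw [hIic, hv.codeWt_span_Iic hmn, ← hv.gw_eq hmn]

end IsWeightAdapted

end WeightAdapted

section Greedy

variable {K : Type*} [Field K] {E D : Submodule K (SumRankSpace K m n)} {r : ℕ}

theorem IsGreedy.codeWt_eq {D' : Submodule K (SumRankSpace K m n)} (hD : IsGreedy E r D)
    (hD' : IsGreedy E r D') : codeWt D = codeWt D' := by
  match r, hD, hD' with
  | 0, hD, hD' => exact congrArg codeWt (hD.trans hD'.symm)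
  | 1, hD, hD' => exact hD.2.2.trans hD'.2.2.symm
  | _ + 2, hD, hD' =>
    exact (hD.2.2.2 D' hD'.1 hD'.2.1 hD'.2.2.1).antisymm (hD'.2.2.2 D hD.1 hD.2.1 hD.2.2.1)

theorem IsGreedy.greedyWt_eq (hD : IsGreedy E r D) : greedyWt E r = codeWt D := by
  obtain ⟨D', hD', hwt⟩ := Nat.sInf_mem (s := {w | ∃ D, IsGreedy E r D ∧ codeWt D = w})
    ⟨_, D, hD, rfl⟩
  exact hwt.symm.trans (hD'.codeWt_eq hD)

theorem IsGreedy.succ {D' : Submodule K (SumRankSpace K m n)} (hD : IsGreedy E r D) (hDD' : D ≤ D')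
    (hD' : D' ≤ E) (hfin : finrank K D' = r + 1) (hwt : codeWt D' = gw E (r + 1)) :
    IsGreedy E (r + 1) D' := by
  match r, hD with
  | 0, _ => exact ⟨hD', hfin, hwt⟩
  | r + 1, hD =>
    exact ⟨hD', hfin, ⟨D, hD, hDD'⟩, fun D'' hD'' hfin' _ => hwt ▸ gw_le_codeWt hD'' hfin'.ge⟩

theorem eq_self_of_lt_succ {f : ℕ → ℕ} {N : ℕ} (hf : ∀ r < N, f r < f (r + 1)) (hN : f N ≤ N)
    (hr : r ≤ N) : f r = r := by
  apply le_antisymm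
  · induction hr using Nat.decreasingInduction with
    | self => exact hN
    | of_succ r hr ih => exact Nat.lt_succ_iff.1 ((hf r hr).trans_le ih)
  · induction r with
    | zero => exact Nat.zero_le _
    | succ r ih => exact (ih (Nat.le_of_succ_le hr)).trans_lt (hf r hr)

theorem ChainCondition.greedyWt_eq_gw (hE : ChainCondition E) (hr : 1 ≤ r)
    (hrE : r ≤ finrank K E) : greedyWt E r = gw E r := by
  obtain ⟨D, hD0, hDE, hlt, hwt⟩ := hE
  have hfin : ∀ s ≤ finrank K E, finrank K (D s) = s := fun s hs =>
    eq_self_of_lt_succ (f := fun s => finrank K (D s))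
      (fun s hs => Submodule.finrank_lt_finrank_of_lt (hlt s hs)) (by rw [hDE]) hs
  have hle : ∀ s ≤ finrank K E, D s ≤ E := fun s hs => by
    induction hs using Nat.decreasingInduction with
    | self => exact hDE.le
    | of_succ s hs ih => exact (hlt s hs).le.trans ih
  have hgreedy : ∀ s ≤ finrank K E, IsGreedy E s (D s) := fun s hs => by
    induction s with
    | zero => exact hD0
    | succ s ih =>
      exact (ih (Nat.le_of_succ_le hs)).succ (hlt s hs).le (hle _ hs) (hfin _ hs)
        (hwt _ s.succ_pos hs)
  exact (hgreedy r hrE).greedyWt_eq.trans (hwt r hr hrE)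

end Greedy

/-! ### Subcodes of MSRD codes -/

section Subsequence

variable {k l : ℕ} {d : Fin k → ℕ} {e : Fin l → ℕ}

theorem count_ofFn {α : Type*} [DecidableEq α] {k : ℕ} (d : Fin k → α) (x : α) :
    (List.ofFn d).count x = Finset.card {r | d r = x} := by
  induction k with
  | zero => simp
  | succ k ih =>
    rw [List.ofFn_succ, List.count_cons, ih, Fin.card_filter_univ_succ']
    simp [add_comm]

theorem isSubseq_of_card_le (hd : Monotone d) (he : Monotone e)
    (h : ∀ r, Finset.card {s | d s = d r} ≤ Finset.card {s | e s = d r}) : IsSubseq d e := by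
  have hsubperm : (List.ofFn d).Subperm (List.ofFn e) := by
    refine List.subperm_ext_iff.2 fun x hx => ?_
    obtain ⟨r, rfl⟩ := List.mem_ofFn.1 hx
    simpa only [count_ofFn] using h r
  obtain ⟨f, hf⟩ := List.sublist_iff_exists_fin_orderEmbedding_get_eq.1
    (List.sublist_of_subperm_of_sortedLE hsubperm hd.sortedLE_ofFn he.sortedLE_ofFn)
  let c := Fin.castOrderIso (List.length_ofFn (f := d)).symm
  refine ⟨fun r => Fin.castOrderIso List.length_ofFn (f (c r)),
    (OrderIso.strictMono _).comp (f.strictMono.comp c.strictMono), fun r => ?_⟩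
  have hr := hf (c r)
  simp only [List.get_ofFn] at hr
  exact hr

theorem card_le_of_forall_lt_add {s : Finset ℕ} {c : ℕ} (hs : ∀ x ∈ s, ∀ y ∈ s, y < x + c) :
    s.card ≤ c := by
  obtain rfl | hne := s.eq_empty_or_nonempty
  · exact Nat.zero_le c
  · have hsub : s ⊆ Finset.Ico (s.min' hne) (s.min' hne + c) := fun x hx =>
      Finset.mem_Ico.2 ⟨s.min'_le x hx, hs _ (s.min'_mem hne) x hx⟩
    simpa using Finset.card_le_card hsub

end Subsequence

section Multiplicity

variable {K : Type*} [Field K] {C : Submodule K (SumRankSpace K m n)}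

theorem le_gw (hmn : n ≤ m) {a r : ℕ} (hC : ∀ x ∈ C, x ≠ 0 → a ≤ srk x) (hr : 0 < r)
    (hrC : r ≤ finrank K C) : a ≤ gw C r := by
  obtain ⟨E, hE, hrE, hwt⟩ := exists_codeWt_eq_gw hrC
  obtain ⟨x, hx, hx0⟩ := Submodule.exists_mem_ne_zero_of_ne_bot (p := E) fun hbot => by
    rw [hbot, finrank_bot] at hrE
    omega
  exact hwt ▸ (hC x (hE hx) hx0).trans (srk_le_codeWt hmn hx)

theorem codeWt_le_sum (hmn : n ≤ m) : codeWt C ≤ ∑ i, n i :=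
  (codeWt_le_sum_maxrank (fun i => isOptAnticode_top (hmn i)) (by simp)).trans
    (Finset.sum_le_sum fun _ _ => maxrank_le fun M _ => M.rank_le_width)

theorem gw_le_sum (hmn : n ≤ m) {r : ℕ} (hr : r ≤ finrank K C) : gw C r ≤ ∑ i, n i :=
  (gw_le_codeWt le_rfl hr).trans (codeWt_le_sum hmn)

theorem card_filter_gw_eq_le (hm : Antitone m) (hmn : n ≤ m) {j : Fin t} {h : ℕ}
    (hj : ∑ i ∈ Finset.Iio j, n i < h) :
    Finset.card {r : Fin (finrank K C) | gw C (r + 1) = h} ≤ m j := by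
  rw [← Finset.card_map Fin.valEmbedding]
  refine card_le_of_forall_lt_add fun r hr s hs => ?_
  obtain ⟨r, hr', rfl⟩ := Finset.mem_map.1 hr
  obtain ⟨s, hs', rfl⟩ := Finset.mem_map.1 hs
  rw [Finset.mem_filter_univ] at hr' hs'
  change s.1 < r.1 + m j
  by_contra! hrs
  have hlt := gw_lt_gw hm hmn (r := r + 1) (s := s + 1) (by omega) s.isLt (hs' ▸ hj)
  exact hlt.ne (hr'.trans hs'.symm)

end Multiplicity

section MSRDFlag

variable {K : Type*} [Field K] {D : ℕ → Submodule K (SumRankSpace K m n)} {a : ℕ}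

/-- A flag `D a ⊇ D (a + 1) ⊇ ⋯ ⊇ D (N + 1) = 0`, where `N = ∑ i, n i`, of codes whose distances
and dimensions are those of MSRD codes of minimum distance `h`, the zero code counting as an MSRD
code of minimum distance `N + 1`. -/
structure IsMSRDFlag (a : ℕ) (D : ℕ → Submodule K (SumRankSpace K m n)) : Prop where
  eq_bot : D (∑ i, n i + 1) = ⊥
  succ_le : ∀ h ∈ Set.Ico a (∑ i, n i + 1), D (h + 1) ≤ D h
  le_srk : ∀ h ∈ Set.Icc a (∑ i, n i + 1), ∀ x ∈ D h, x ≠ 0 → h ≤ srk x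
  finrank_add_sum : ∀ h ∈ Set.Icc a (∑ i, n i + 1),
    finrank K (D h) + ∑ i, m i * blockFill n (h - 1) i = ∑ i, m i * n i

theorem isMSRDFlag_update (hchain : ∀ h, a ≤ h → h < ∑ i, n i → D (h + 1) ≤ D h)
    (hD : ∀ h, a ≤ h → h ≤ ∑ i, n i → IsMSRD (D h) ∧ minDist (D h) = h) :
    IsMSRDFlag a (Function.update D (∑ i, n i + 1) ⊥) where
  eq_bot := Function.update_self ..
  succ_le h hh := by
    rw [Function.update_of_ne hh.2.ne]
    obtain hlt | heq := (Nat.le_of_lt_succ hh.2).lt_or_eq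
    · rw [Function.update_of_ne (by omega)]
      exact hchain h hh.1 hlt
    · rw [heq, Function.update_self]
      exact bot_le
  le_srk h hh x hx hx0 := by
    obtain hlt | rfl := hh.2.lt_or_eq
    · rw [Function.update_of_ne hlt.ne] at hx
      exact (hD h hh.1 (Nat.le_of_lt_succ hlt)).2.symm.trans_le (minDist_le_srk hx hx0)
    · rw [Function.update_self] at hx
      exact absurd ((Submodule.mem_bot K).1 hx) hx0
  finrank_add_sum h hh := by
    obtain hlt | rfl := hh.2.lt_or_eq
    · obtain ⟨hmsrd, hdist⟩ := hD h hh.1 (Nat.le_of_lt_succ hlt)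
      rw [Function.update_of_ne hlt.ne, ← hmsrd.finrank_add_sum_blockFill, hdist]
    · simp [blockFill_sum]

namespace IsMSRDFlag

/-- The codewords of the `h`-th code of the flag supported on the first `h` columns; the members of
an adapted basis that account for the generalized weight `h` span this space. -/
def leadingPart (D : ℕ → Submodule K (SumRankSpace K m n)) (h : ℕ) :
    Submodule K (SumRankSpace K m n) :=
  D h ⊓ blockAnticode K m n (blockFill n h)

theorem disjoint_leadingPart (hmn : n ≤ m) (hD : IsMSRDFlag a D) {h : ℕ}
    (hh : h ∈ Set.Ico a (∑ i, n i + 1)) : Disjoint (leadingPart D h) (D (h + 1)) := by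
  refine Submodule.disjoint_def.2 fun x hx hx' => by_contra fun hx0 => ?_
  have hle := hD.le_srk (h + 1) ⟨Nat.le_succ_of_le hh.1, hh.2⟩ x hx' hx0
  have hwt := (srk_le_codeWt hmn hx).trans
    (codeWt_le_of_le_blockAnticode_blockFill (h := h) hmn inf_le_right)
  omega

theorem leadingPart_sup (hmn : n ≤ m) (hD : IsMSRDFlag a D) {h : ℕ}
    (hh : h ∈ Set.Ico a (∑ i, n i + 1)) : leadingPart D h ⊔ D (h + 1) = D h := by
  refine Submodule.eq_of_le_of_finrank_le (sup_le inf_le_left (hD.succ_le h hh)) ?_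
  have hinf := finrank_add_finrank_le_add_finrank_inf (K := K) (S := D h)
    (T := blockAnticode K m n (blockFill n h)) (U := ⊤) le_top le_top
  have hsup := Submodule.finrank_sup_add_finrank_inf_eq (leadingPart D h) (D (h + 1))
  have hsucc := hD.finrank_add_sum (h + 1) ⟨Nat.le_succ_of_le hh.1, hh.2⟩
  rw [finrank_top, finrank_sumRankSpace, finrank_blockAnticode fun i => blockFill_le i] at hinf
  rw [(hD.disjoint_leadingPart hmn hh).eq_bot, finrank_bot] at hsup
  rw [Nat.add_sub_cancel] at hsucc
  rw [leadingPart] at hsup ⊢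
  omega

theorem finrank_leadingPart (hmn : n ≤ m) (hD : IsMSRDFlag a D) {h : ℕ} {j : Fin t}
    (hah : a ≤ h) (hlt : ∑ i ∈ Finset.Iio j, n i < h)
    (hle : h ≤ ∑ i ∈ Finset.Iio j, n i + n j) : finrank K (leadingPart D h) = m j := by
  have hsum : h < ∑ i, n i + 1 := Nat.lt_succ_of_le
    (hle.trans (sum_Iio_add_le_sum (Finset.subset_univ _)))
  have hsup := Submodule.finrank_sup_add_finrank_inf_eq (leadingPart D h) (D (h + 1))
  have hself := hD.finrank_add_sum h ⟨hah, hsum.le⟩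
  have hsucc := hD.finrank_add_sum (h + 1) ⟨Nat.le_succ_of_le hah, hsum⟩
  rw [hD.leadingPart_sup hmn ⟨hah, hsum⟩, (hD.disjoint_leadingPart hmn ⟨hah, hsum⟩).eq_bot,
    finrank_bot] at hsup
  obtain ⟨δ, rfl⟩ := Nat.exists_eq_add_of_lt hlt
  rw [Nat.add_sub_cancel, sum_mul_blockFill_prefix_add m (by omega)] at hself
  have hfill := sum_mul_blockFill_prefix_add m (δ := δ + 1) (j := j) (n := n) (by omega)
  rw [mul_add_one, ← add_assoc] at hfill
  rw [Nat.add_sub_cancel, hfill] at hsucc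
  omega

theorem exists_isWeightAdapted_gw (hmn : n ≤ m) (hD : IsMSRDFlag a D) (ha : a ≤ ∑ i, n i) :
    ∃ v : Fin (finrank K (D a)) → SumRankSpace K m n,
      IsWeightAdapted v (fun r => gw (D a) (r + 1)) ∧ Submodule.span K (Set.range v) = D a ∧
        ∀ h ∈ Set.Icc a (∑ i, n i), Finset.card {r : Fin (finrank K (D a)) | gw (D a) (r + 1) = h} =
          finrank K (leadingPart D h) := by
  have hsup := fun h hh => hD.leadingPart_sup (h := h) hmn hh
  obtain ⟨v, e, hv, he, hmem, hcard⟩ := exists_linearIndependent_of_disjoint_succ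
    (Nat.le_succ_of_le ha) hD.eq_bot hsup fun h hh => hD.disjoint_leadingPart hmn hh
  have hvD : ∀ h i, a ≤ h → h ≤ e i → v i ∈ D h := fun h i hah hhi =>
    le_of_sup_succ_eq hsup ⟨hah, hhi⟩ (hmem i).1.2 (hmem i).2
  have hadapted : IsWeightAdapted v e := by
    refine ⟨hv, fun r => ?_, fun r x hx => ?_⟩
    · refine codeWt_le_of_le_blockAnticode_blockFill hmn (Submodule.span_le.2 ?_)
      exact Set.image_subset_iff.2 fun i hi =>
        blockAnticode_mono (blockFill_mono (he hi)) (hmem i).2.2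
    · refine hD.le_srk (e r) ⟨(hmem r).1.1, (hmem r).1.2.le⟩ x (Submodule.span_le.2 ?_ hx)
      exact Set.image_subset_iff.2 fun i hi => hvD _ i (hmem r).1.1 (he hi)
  have hspan : Submodule.span K (Set.range v) = D a := Submodule.eq_of_le_of_finrank_eq
    (Submodule.span_le.2 (Set.range_subset_iff.2 fun i => hvD a i le_rfl (hmem i).1.1))
    hadapted.finrank_span
  obtain rfl : e = fun r : Fin (finrank K (D a)) => gw (D a) (r + 1) := funext fun r =>
    (hadapted.gw_eq hmn r).symm.trans (by rw [hspan])
  exact ⟨v, hadapted, hspan, fun h hh => hcard h ⟨hh.1, Nat.lt_succ_of_le hh.2⟩⟩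

theorem isSubseq_gw (hm : Antitone m) (hmn : n ≤ m) (hD : IsMSRDFlag a D) (ha : 0 < a)
    (haN : a ≤ ∑ i, n i) {C : Submodule K (SumRankSpace K m n)} (hC : C ≤ D a) :
    IsSubseq (fun r : Fin (finrank K C) => gw C (r + 1))
      (fun r : Fin (finrank K (D a)) => gw (D a) (r + 1)) := by
  obtain ⟨-, -, -, hcard⟩ := hD.exists_isWeightAdapted_gw hmn haN
  refine isSubseq_of_card_le (monotone_gw_succ C) (monotone_gw_succ (D a)) fun r => ?_
  have hmem : gw C (r + 1) ∈ Set.Icc a (∑ i, n i) :=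
    ⟨le_gw hmn (fun x hx => hD.le_srk a ⟨le_rfl, Nat.le_succ_of_le haN⟩ x (hC hx)) r.1.succ_pos
      r.isLt, gw_le_sum hmn r.isLt⟩
  obtain ⟨j, hlt, hle⟩ := exists_prefix_lt_and_le (ha.trans_le hmem.1) hmem.2
  rw [hcard _ hmem, hD.finrank_leadingPart hmn hmem.1 hlt hle]
  exact card_filter_gw_eq_le hm hmn hlt

end IsMSRDFlag

end MSRDFlag

theorem IsWeightAdapted.exists_subcode {K : Type*} [Field K] {k l : ℕ}
    {v : Fin l → SumRankSpace K m n} {d : Fin k → ℕ} {e : Fin l → ℕ} (hmn : n ≤ m)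
    (hv : IsWeightAdapted v e) (hd : IsSubseq d e) :
    ∃ C ≤ Submodule.span K (Set.range v), finrank K C = k ∧ (∀ r : Fin k, gw C (r + 1) = d r) ∧
      ChainCondition C ∧ ∀ r : Fin k, greedyWt C (r + 1) = d r := by
  obtain ⟨φ, hφ, hde⟩ := hd
  obtain rfl : d = e ∘ φ := funext hde
  have hvφ := hv.comp hmn hφ
  refine ⟨Submodule.span K (Set.range (v ∘ φ)),
    Submodule.span_mono (Set.range_comp_subset_range φ v), hvφ.finrank_span, hvφ.gw_eq hmn,
    hvφ.chainCondition hmn, fun r => ?_⟩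
  rw [(hvφ.chainCondition hmn).greedyWt_eq_gw r.1.succ_pos (by rw [hvφ.finrank_span]; exact r.isLt),
    hvφ.gw_eq hmn]

theorem gw_subcode_of_MSRD_characterization_general {K : Type*} [Field K]
    (hm : Antitone m) (hmn : n ≤ m) (𝒟 : Submodule K (SumRankSpace K m n))
    (hMSRD : IsMSRD 𝒟) (dd : ℕ) (hdd : minDist 𝒟 = dd)
    (Dc : ℕ → Submodule K (SumRankSpace K m n)) (hDc0 : Dc dd = 𝒟)
    (hDc_chain : ∀ h, dd ≤ h → h < ∑ i, n i → Dc (h + 1) ≤ Dc h)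
    (hDc_MSRD : ∀ h, dd ≤ h → h ≤ ∑ i, n i → IsMSRD (Dc h) ∧ minDist (Dc h) = h)
    (k : ℕ) (d : Fin k → ℕ) :
    ((∃ 𝒞 ≤ 𝒟, finrank K 𝒞 = k ∧ ∀ r : Fin k, gw 𝒞 (r + 1) = d r) ↔
      (k ≤ finrank K 𝒟 ∧ IsSubseq d (fun r : Fin (finrank K 𝒟) => gw 𝒟 (r + 1)))) ∧
    (IsSubseq d (fun r : Fin (finrank K 𝒟) => gw 𝒟 (r + 1)) →
      ∃ 𝒞 ≤ 𝒟, finrank K 𝒞 = k ∧ (∀ r : Fin k, gw 𝒞 (r + 1) = d r) ∧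
        ChainCondition 𝒞 ∧ ∀ r : Fin k, greedyWt 𝒞 (r + 1) = d r) := by
  have hpos : 0 < dd := hdd ▸ hMSRD.minDist_pos
  have hle : dd ≤ ∑ i, n i := hdd ▸ hMSRD.minDist_le
  clear hMSRD hdd
  obtain ⟨D, hD, rfl⟩ : ∃ D, IsMSRDFlag dd D ∧ D dd = 𝒟 :=
    ⟨_, isMSRDFlag_update hDc_chain hDc_MSRD,
      (Function.update_of_ne (Nat.lt_succ_of_le hle).ne ..).trans hDc0⟩
  obtain ⟨v, hv, hspan, -⟩ := hD.exists_isWeightAdapted_gw hmn hle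
  have hexists := fun hd => hspan ▸ hv.exists_subcode (d := d) hmn hd
  refine ⟨⟨?_, fun ⟨_, hd⟩ => ?_⟩, hexists⟩
  · rintro ⟨𝒞, h𝒞, rfl, hd⟩
    obtain rfl : (fun r : Fin (finrank K 𝒞) => gw 𝒞 (r + 1)) = d := funext hd
    exact ⟨Submodule.finrank_mono h𝒞, hD.isSubseq_gw hm hmn hpos hle h𝒞⟩
  · obtain ⟨𝒞, h𝒞, hk, hgw, -⟩ := hexists hd
    exact ⟨𝒞, h𝒞, hk, hgw⟩

/-- Let `𝒟 ⊆ 𝕄` be an MSRD code of minimum distance `dd`, contained in a chain of MSRD codes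
`𝒟 = 𝒟_dd ⊇ 𝒟_{dd+1} ⊇ ⋯ ⊇ 𝒟_n` with `d(𝒟_h) = h`. A sequence of positive integers
`d_1 ≤ ⋯ ≤ d_k` is the sequence of generalized sum-rank weights of a subcode `𝒞 ⊆ 𝒟` iff
`k ≤ dim 𝒟` and it is a subsequence of the sequence of generalized weights of `𝒟`; moreover,
in that case `𝒞` may be chosen satisfying the chain condition, hence with `g_r(𝒞) = d_r`. -/
theorem gw_subcode_of_MSRD_characterization (ht : 0 < t)
    (hm_mono : ∀ i j : Fin t, i ≤ j → m j ≤ m i)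
    (hn_pos : ∀ i, 0 < n i) (hmn : ∀ i, n i ≤ m i)
    (𝒟 : Submodule F (∀ i : Fin t, Matrix (Fin (m i)) (Fin (n i)) F))
    (hMSRD : IsMSRD 𝒟) (dd : ℕ) (hdd : minDist 𝒟 = dd)
    (Dc : ℕ → Submodule F (∀ i : Fin t, Matrix (Fin (m i)) (Fin (n i)) F))
    (hDc0 : Dc dd = 𝒟)
    (hDc_chain : ∀ h, dd ≤ h → h < ∑ i, n i → Dc (h + 1) ≤ Dc h)
    (hDc_MSRD : ∀ h, dd ≤ h → h ≤ ∑ i, n i → IsMSRD (Dc h) ∧ minDist (Dc h) = h)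
    (k : ℕ) (d : Fin k → ℕ) (hmono : Monotone d) (hpos : ∀ r, 1 ≤ d r) :
    ((∃ 𝒞 : Submodule F (∀ i : Fin t, Matrix (Fin (m i)) (Fin (n i)) F),
        𝒞 ≤ 𝒟 ∧ Module.finrank F 𝒞 = k ∧ ∀ r : Fin k, gw 𝒞 (r.1 + 1) = d r) ↔
      (k ≤ Module.finrank F 𝒟 ∧
        IsSubseq d (fun r : Fin (Module.finrank F 𝒟) => gw 𝒟 (r.1 + 1)))) ∧
    (k ≤ Module.finrank F 𝒟 →
      IsSubseq d (fun r : Fin (Module.finrank F 𝒟) => gw 𝒟 (r.1 + 1)) →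
      ∃ 𝒞 : Submodule F (∀ i : Fin t, Matrix (Fin (m i)) (Fin (n i)) F),
        𝒞 ≤ 𝒟 ∧ Module.finrank F 𝒞 = k ∧ (∀ r : Fin k, gw 𝒞 (r.1 + 1) = d r) ∧
        ChainCondition 𝒞 ∧ ∀ r : Fin k, greedyWt 𝒞 (r.1 + 1) = d r) := by
  have hgen := gw_subcode_of_MSRD_characterization_general (fun i j hij => hm_mono i j hij) hmn 𝒟
    hMSRD dd hdd Dc hDc0 hDc_chain hDc_MSRD k d
  exact ⟨hgen.1, fun _ => hgen.2⟩
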